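/- Let G be a planar, 1-ended, vertex-transitive, locally finite graph, fix a vertex o and a fundamental domain Δ of flags at o, and let φ : Flags(G) → Δ assign to each flag the unique flag of Δ in its Aut(G)-orbit. If f and h are flags of G with φ(f) = φ(h), then there is exactly one automorphism a of G with a(f) = h. -/

import Mathlib

open SimpleGraph

/-- A topological embedding of a graph `G` in the plane: vertices are points, edges are
arcs meeting only at common endpoints and avoiding other vertices. -/
structure PlanarEmbedding {V : Type*} (G : SimpleGraph V) where
  vpos : V → ℝ × ℝ
  vinj : Function.Injective vpos
  arc : ∀ ⦃u v : V⦄, G.Adj u v → Set (ℝ × ℝ)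
  arc_isArc : ∀ ⦃u v : V⦄ (h : G.Adj u v),
    ∃ f : Path (vpos u) (vpos v), Function.Injective f ∧ Set.range f = arc h
  arc_symm : ∀ ⦃u v : V⦄ (h : G.Adj u v), arc h.symm = arc h
  arc_inter : ∀ ⦃u v u' v' : V⦄ (h : G.Adj u v) (h' : G.Adj u' v'),
    s(u, v) ≠ s(u', v') → arc h ∩ arc h' ⊆ vpos '' (({u, v} : Set V) ∩ {u', v'})
  arc_vertex : ∀ ⦃u v : V⦄ (h : G.Adj u v) (w : V), vpos w ∈ arc h → w = u ∨ w = v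

/-- The point set of the embedded graph. -/
def PlanarEmbedding.image {V : Type*} {G : SimpleGraph V} (emb : PlanarEmbedding G) :
    Set (ℝ × ℝ) :=
  Set.range emb.vpos ∪ ⋃ (u : V) (v : V) (h : G.Adj u v), emb.arc h

/-- A face of the embedding: a connected component of the complement of the image. -/
def PlanarEmbedding.IsFace {V : Type*} {G : SimpleGraph V} (emb : PlanarEmbedding G)
    (F : Set (ℝ × ℝ)) : Prop :=
  ∃ x ∈ emb.imageᶜ, F = connectedComponentIn emb.imageᶜ x

/-- The boundary of a face: the set of edges whose arcs lie in the closure of the face. -/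
def PlanarEmbedding.boundaryEdges {V : Type*} {G : SimpleGraph V} (emb : PlanarEmbedding G)
    (F : Set (ℝ × ℝ)) : Set (Sym2 V) :=
  {e | ∃ (u v : V) (h : G.Adj u v), e = s(u, v) ∧ emb.arc h ⊆ closure F}

/-- A peripheral cycle: a cycle that is induced (chordless) and non-separating. -/
def IsPeripheral {V : Type*} (G : SimpleGraph V) {v : V} (w : G.Walk v v) : Prop :=
  w.IsCycle ∧ (∀ a ∈ w.support, ∀ b ∈ w.support, G.Adj a b → s(a, b) ∈ w.edges) ∧
    ({x | x ∉ w.support} = (∅ : Set V) ∨ (G.induce {x | x ∉ w.support}).Connected)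

/-- A 3-connected graph: more than 3 vertices, and removing any at most 2 vertices leaves
it connected. -/
def ThreeConnected {V : Type*} (G : SimpleGraph V) : Prop :=
  (3 < Nat.card V ∨ Infinite V) ∧
    ∀ s : Set V, s.Finite → s.ncard ≤ 2 → (G.induce sᶜ).Connected

/-- A locally finite graph has exactly one end. -/
def OneEnded {V : Type*} (G : SimpleGraph V) : Prop :=
  ∀ K : Finset V, ∃! C : G.ComponentCompl (K : Set V), C.supp.Infinite

/-- A face boundary of `G`, combinatorially: the edge set of a peripheral cycle (this is
embedding-independent, by Whitney's theorem). -/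
def IsFaceBoundary {V : Type*} (G : SimpleGraph V) (F : Set (Sym2 V)) : Prop :=
  ∃ (v : V) (w : G.Walk v v), IsPeripheral G w ∧ F = {e | e ∈ w.edges}

/-- A flag: a triple (vertex, edge, face boundary). -/
abbrev GFlag (V : Type*) := V × Sym2 V × Set (Sym2 V)

def IsFlag {V : Type*} (G : SimpleGraph V) (f : GFlag V) : Prop :=
  f.1 ∈ f.2.1 ∧ f.2.1 ∈ f.2.2 ∧ IsFaceBoundary G f.2.2

/-- The action of an automorphism on flags. -/
def flagMap {V : Type*} {G : SimpleGraph V} (α : G ≃g G) (f : GFlag V) : GFlag V :=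
  (α f.1, Sym2.map ⇑α f.2.1, Sym2.map ⇑α '' f.2.2)

/-- Two flags at a common vertex are incident if they share an edge or a face boundary. -/
def FlagIncident {V : Type*} (f g : GFlag V) : Prop :=
  f.1 = g.1 ∧ (f.2.1 = g.2.1 ∨ f.2.2 = g.2.2)

/-!
Composing the automorphisms that carry `f` and `h` to their common colour gives existence.
Uniqueness says that an automorphism `α` fixing a flag is the identity. Such an `α` fixes the face
cycle of the flag pointwise, because every vertex of a cycle has only two neighbours on it. Moreover
`G` is 3-connected: its degree is at least three, and the distinct translates of a smallest finite
set with smallest boundary are disjoint, which bounds that boundary below by half of the degree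
plus one.

Suppose that `α` moves `y`, and let `C` be the component of `y` in the subgraph of moved vertices.
Any three fixed vertices next to `C` are the terminals of a theta graph (three spokes and two hubs)
in `C ∪ α(C)`: if `C` and `α(C)` are disjoint, they are the hubs themselves, and if they agree, a
theta graph is missing only if `α` fixes a cut vertex of `C`, although it moves all of `C`. A
component of the remaining graph next to three fixed vertices would be a third hub and give a minor
`K₃,₃`. Hence every fixed vertex is next to `C`, in particular three vertices of the face cycle are.
Since the cycle does not separate `G`, the theta graph rooted at them extends to a minor `K₅` or
`K₃,₃`.

These two graphs are not planar. Order the vertices linearly, and call disjoint edges `ab` and `cd`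
interleaved if `a < c < b < d`. If no disjoint edges cross, the number of interleaved pairs is
modulo 2 the sum of the winding numbers of the edges around the ends of the edges disjoint from
them, and each winding number occurs an even number of times because a vertex has even degree away
from a disjoint edge. But for `K₅` and `K₃,₃` the number of interleaved pairs is odd.
-/

section ContinuousLogarithm

theorem exists_continuous_log {X : Type*} [TopologicalSpace X] [SimplyConnectedSpace X]
    [LocallyPathConnectedSpace X] {f : X → ℂ} (hf : Continuous f) (hf0 : ∀ x, f x ≠ 0) :
    ∃ L : C(X, ℂ), ∀ x, Complex.exp (L x) = f x := by
  obtain ⟨x₀⟩ := (inferInstance : Nonempty X)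
  obtain ⟨L, ⟨-, hL⟩, -⟩ := Complex.isCoveringMapOn_exp.existsUnique_continuousMap_lifts
    ⟨f, hf⟩ (a₀ := x₀) (e₀ := Complex.log (f x₀)) (Complex.exp_log (hf0 x₀)) hf0
  exact ⟨L, congrFun hL⟩

theorem eq_of_exp_eq_one {X : Type*} [TopologicalSpace X] [SimplyConnectedSpace X]
    [LocallyPathConnectedSpace X] {d : X → ℂ} (hd : Continuous d)
    (h : ∀ x, Complex.exp (d x) = 1) (x y : X) : d x = d y := by
  have lift_unique := Complex.isCoveringMapOn_exp.existsUnique_continuousMap_lifts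
    (ContinuousMap.const X (1 : ℂ)) (a₀ := y) (e₀ := d y) (by simp [h]) (by simp)
  have : (⟨d, hd⟩ : C(X, ℂ)) = ContinuousMap.const X (d y) :=
    lift_unique.unique ⟨rfl, funext h⟩ ⟨rfl, funext fun _ => h y⟩
  exact DFunLike.congr_fun this x

open Classical in
/-- The total change along `[0, 1]` of a continuous branch of `log f`
(junk value `0` if `f` has no continuous logarithm on `ℝ`). -/
noncomputable def logIncrement (f : ℝ → ℂ) : ℂ :=
  if h : ∃ L : C(ℝ, ℂ), ∀ s, Complex.exp (L s) = f s then h.choose 1 - h.choose 0 else 0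

theorem logIncrement_eq {f L : ℝ → ℂ} (hL : Continuous L) {k : ℂ}
    (h : ∀ s, Complex.exp (L s + k) = f s) : logIncrement f = L 1 - L 0 := by
  have hlog : ∃ L : C(ℝ, ℂ), ∀ s, Complex.exp (L s) = f s := ⟨⟨fun s => L s + k, by fun_prop⟩, h⟩
  rw [logIncrement, dif_pos hlog]
  have hconst := eq_of_exp_eq_one (d := fun s => hlog.choose s - (L s + k)) (by fun_prop)
    (fun s => by
      rw [Complex.exp_sub, h, hlog.choose_spec, div_self (h s ▸ Complex.exp_ne_zero _)]) 1 0
  linear_combination hconst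

theorem exists_logIncrement_eq {f : ℝ → ℂ} (hf : Continuous f) (hf0 : ∀ s, f s ≠ 0) {x y : ℂ}
    (hx : Complex.exp x = f 0) (hy : Complex.exp y = f 1) :
    ∃ n : ℤ, logIncrement f = y - x + n * (2 * Real.pi * Complex.I) := by
  obtain ⟨L, hL⟩ := exists_continuous_log hf hf0
  obtain ⟨n₀, h₀⟩ := Complex.exp_eq_exp_iff_exists_int.1 ((hL 0).trans hx.symm)
  obtain ⟨n₁, h₁⟩ := Complex.exp_eq_exp_iff_exists_int.1 ((hL 1).trans hy.symm)
  refine ⟨n₁ - n₀, ?_⟩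
  rw [logIncrement_eq L.continuous (k := 0) (by simpa using hL), h₀, h₁]
  push_cast
  ring

-- `(s, t) ↦ p s - q t` has a logarithm on the whole square; both sides are its change
-- from one corner to the opposite one.
theorem logIncrement_add_eq_of_disjoint {p q : ℝ → ℂ} (hp : Continuous p) (hq : Continuous q)
    (hpq : ∀ s t, p s ≠ q t) :
    logIncrement (fun s => p s - q 0) + logIncrement (fun t => q t - p 1) =
      logIncrement (fun t => q t - p 0) + logIncrement (fun s => p s - q 1) := by
  obtain ⟨L, hL⟩ := exists_continuous_log (X := ℝ × ℝ) (f := fun x => p x.1 - q x.2)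
    (by fun_prop) (fun x => sub_ne_zero.2 (hpq x.1 x.2))
  have horizontal (t : ℝ) : logIncrement (fun s => p s - q t) = L (1, t) - L (0, t) :=
    logIncrement_eq (L := fun s => L (s, t)) (by fun_prop) (k := 0) (fun s => by simp [hL])
  have vertical (s : ℝ) : logIncrement (fun t => q t - p s) = L (s, 1) - L (s, 0) :=
    logIncrement_eq (L := fun t => L (s, t)) (by fun_prop) (k := Real.pi * Complex.I)
      (fun t => by rw [Complex.exp_add, hL, Complex.exp_pi_mul_I]; ring)
  rw [horizontal, horizontal, vertical, vertical]
  ring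

end ContinuousLogarithm

section Drawing

variable {ι : Type*} {H : SimpleGraph ι}

/-- A drawing of `H` in the plane whose edges avoid all vertices but their ends and in which
disjoint edges do not meet. The two orientations of an edge need not be drawn alike. -/
structure Drawing (H : SimpleGraph ι) where
  point : ι → ℂ
  point_injective : Function.Injective point
  curve : ι → ι → ℝ → ℂ
  continuous_curve {a b} : H.Adj a b → Continuous (curve a b)
  curve_zero {a b} : H.Adj a b → curve a b 0 = point a
  curve_one {a b} : H.Adj a b → curve a b 1 = point b
  curve_ne_point {a b c} : H.Adj a b → a ≠ c → b ≠ c → ∀ s, curve a b s ≠ point c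
  curve_ne_curve {a b c d} : H.Adj a b → H.Adj c d → a ≠ c → a ≠ d → b ≠ c → b ≠ d →
    ∀ s t, curve a b s ≠ curve c d t

variable [LinearOrder ι]

-- The branches of the two logarithms of `±(P v - P w)` differ by `πi`; the sign records the order.
theorem exists_log_sub {P : ι → ℂ} (hP : Function.Injective P) :
    ∃ θ : ι → ι → ℂ, ∀ v w, v ≠ w → Complex.exp (θ v w) = P v - P w ∧
      θ v w - θ w v = (1 - 2 * if v < w then 1 else 0) * (Real.pi * Complex.I) := by
  refine ⟨fun v w => if v < w then Complex.log (P v - P w)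
    else Complex.log (P w - P v) + Real.pi * Complex.I, fun v w hvw => ?_⟩
  have hsub : P v - P w ≠ 0 := sub_ne_zero.2 (hP.ne hvw)
  have hsub' : P w - P v ≠ 0 := sub_ne_zero.2 (hP.ne hvw.symm)
  rcases lt_or_gt_of_ne hvw with h | h
  · simp only [h, h.not_gt, if_true, if_false, Complex.exp_log hsub, true_and]
    ring
  · simp only [h, h.not_gt, if_true, if_false, Complex.exp_add, Complex.exp_log hsub',
      Complex.exp_pi_mul_I]
    constructor <;> ring

theorem Drawing.exists_winding (D : Drawing H) :
    ∃ n : ι × ι → ι → ZMod 2, ∀ a b c d, H.Adj a b → H.Adj c d → a ≠ c → a ≠ d → b ≠ c → b ≠ d →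
      n (a, b) c + n (a, b) d + (n (c, d) a + n (c, d) b) =
        (if a < c then 1 else 0) + (if a < d then 1 else 0) +
          ((if b < c then 1 else 0) + (if b < d then 1 else 0)) := by
  obtain ⟨θ, hθ⟩ := exists_log_sub D.point_injective
  have winding (a b c : ι) : ∃ n : ℤ, H.Adj a b → a ≠ c → b ≠ c →
      logIncrement (fun s => D.curve a b s - D.point c) =
        θ b c - θ a c + n * (2 * Real.pi * Complex.I) := by
    by_cases h : H.Adj a b ∧ a ≠ c ∧ b ≠ c
    · obtain ⟨hab, hac, hbc⟩ := h
      obtain ⟨n, hn⟩ := exists_logIncrement_eq (f := fun s => D.curve a b s - D.point c)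
        ((D.continuous_curve hab).sub continuous_const)
        (fun s => sub_ne_zero.2 (D.curve_ne_point hab hac hbc s))
        (by rw [(hθ a c hac).1, D.curve_zero hab]) (by rw [(hθ b c hbc).1, D.curve_one hab])
      exact ⟨n, fun _ _ _ => hn⟩
    · exact ⟨0, fun hab hac hbc => absurd ⟨hab, hac, hbc⟩ h⟩
  choose n hn using winding
  refine ⟨fun e c => n e.1 e.2 c, fun a b c d hab hcd hac had hbc hbd => ?_⟩
  have square := logIncrement_add_eq_of_disjoint (D.continuous_curve hab)
    (D.continuous_curve hcd) (D.curve_ne_curve hab hcd hac had hbc hbd)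
  rw [D.curve_zero hab, D.curve_one hab, D.curve_zero hcd, D.curve_one hcd, hn a b c hab hac hbc,
    hn a b d hab had hbd, hn c d a hcd hac.symm had.symm, hn c d b hcd hbc.symm hbd.symm] at square
  have integral : n a b c + n c d b - n a b d - n c d a =
      (if b < c then 1 else 0) - (if a < c then 1 else 0) + (if a < d then 1 else 0)
        - (if b < d then 1 else 0) := by
    have h2pi : (2 * Real.pi * Complex.I : ℂ) ≠ 0 := Complex.two_pi_I_ne_zero
    rw [← Int.cast_inj (α := ℂ)]
    apply mul_right_cancel₀ h2pi
    push_cast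
    linear_combination square - (hθ b c hbc).2 + (hθ a c hac).2 - (hθ a d had).2 + (hθ b d hbd).2
  have mod_two := congrArg (Int.cast : ℤ → ZMod 2) integral
  push_cast [CharTwo.sub_eq_add] at mod_two
  linear_combination mod_two

theorem sum_lt_add_swap_eq_sum {α κ M : Type*} [Fintype α] [LinearOrder κ] [AddCommMonoid M]
    {r : α → α → Prop} [DecidableRel r] (hr : ∀ x y, r x y → r y x) (k : α → κ)
    (hk : ∀ x y, r x y → k x ≠ k y) (g : α → α → M) :
    ∑ x, ∑ y, (if r x y ∧ k x < k y then g x y + g y x else 0) =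
      ∑ x, ∑ y, if r x y then g x y else 0 := by
  have split (x y : α) : (if r x y then g x y else 0) =
      (if r x y ∧ k x < k y then g x y else 0) + if r y x ∧ k y < k x then g x y else 0 := by
    by_cases h : r x y
    · rcases lt_or_gt_of_ne (hk x y h) with hlt | hlt <;> simp [h, hr x y h, hlt, hlt.not_gt]
    · have h' : ¬ r y x := fun h' => h (hr y x h')
      simp [h, h']
  simp only [split, Finset.sum_add_distrib]
  rw [Finset.sum_comm (f := fun x y => if r y x ∧ k y < k x then g x y else 0),
    ← Finset.sum_add_distrib]
  refine Finset.sum_congr rfl fun x _ => ?_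
  rw [← Finset.sum_add_distrib]
  refine Finset.sum_congr rfl fun y _ => ?_
  split_ifs <;> simp

variable [Fintype ι] [DecidableRel H.Adj]

theorem sum_disjoint_edges_eq_zero (a b : ι) (hab : H.Adj a b)
    (heven : ∀ a b v, H.Adj a b → a ≠ v → b ≠ v →
      Even (Finset.univ.filter fun w => H.Adj v w ∧ a ≠ w ∧ b ≠ w).card) (m : ι → ZMod 2) :
    ∑ f : ι × ι, (if H.Adj f.1 f.2 ∧ f.1 < f.2 ∧ a ≠ f.1 ∧ a ≠ f.2 ∧ b ≠ f.1 ∧ b ≠ f.2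
      then m f.1 + m f.2 else 0) = 0 := by
  have key := sum_lt_add_swap_eq_sum
    (r := fun v w => H.Adj v w ∧ a ≠ v ∧ a ≠ w ∧ b ≠ v ∧ b ≠ w)
    (fun v w ⟨h, h₁, h₂, h₃, h₄⟩ => ⟨h.symm, h₂, h₁, h₄, h₃⟩) (id : ι → ι)
    (fun v w h => h.1.ne) (fun v _ => m v)
  rw [Fintype.sum_prod_type]
  calc _ = _ := Finset.sum_congr rfl fun v _ => Finset.sum_congr rfl fun w _ =>
        if_congr (by simp only [id]; tauto) rfl rfl
    _ = _ := key
    _ = 0 := Finset.sum_eq_zero fun v _ => ?_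
  by_cases hv : a ≠ v ∧ b ≠ v
  · rw [← Finset.sum_filter, Finset.sum_const, nsmul_eq_mul]
    have := (ZMod.natCast_eq_zero_iff_even).2 (heven a b v hab hv.1 hv.2)
    simp only [hv.1, hv.2, ne_eq, not_false_eq_true, true_and] at this ⊢
    rw [this, zero_mul]
  · exact Finset.sum_eq_zero fun w _ => if_neg (by tauto)

theorem Drawing.even_card_interleaved (D : Drawing H)
    (heven : ∀ a b v, H.Adj a b → a ≠ v → b ≠ v →
      Even (Finset.univ.filter fun w => H.Adj v w ∧ a ≠ w ∧ b ≠ w).card) :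
    Even (Finset.univ.filter fun x : (ι × ι) × ι × ι => H.Adj x.1.1 x.1.2 ∧ H.Adj x.2.1 x.2.2 ∧
      x.1.1 < x.2.1 ∧ x.2.1 < x.1.2 ∧ x.1.2 < x.2.2).card := by
  obtain ⟨n, hn⟩ := D.exists_winding
  let r (e f : ι × ι) : Prop := (H.Adj e.1 e.2 ∧ e.1 < e.2) ∧ (H.Adj f.1 f.2 ∧ f.1 < f.2) ∧
    e.1 ≠ f.1 ∧ e.1 ≠ f.2 ∧ e.2 ≠ f.1 ∧ e.2 ≠ f.2
  have hr (e f) (h : r e f) : r f e :=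
    ⟨h.2.1, h.1, h.2.2.1.symm, h.2.2.2.2.1.symm, h.2.2.2.1.symm, h.2.2.2.2.2.symm⟩
  have count := sum_lt_add_swap_eq_sum hr Prod.fst (fun e f h => h.2.2.1)
    (fun e f => n e f.1 + n e f.2)
  rw [← ZMod.natCast_eq_zero_iff_even, ← Finset.sum_boole, Fintype.sum_prod_type]
  calc _ = _ := Finset.sum_congr rfl fun e _ => Finset.sum_congr rfl fun f _ => ?interleaved
    _ = _ := count
    _ = 0 := Finset.sum_eq_zero fun e _ => ?even
  case interleaved =>
    obtain ⟨a, b⟩ := e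
    obtain ⟨c, d⟩ := f
    by_cases h : r (a, b) (c, d) ∧ a < c
    · rw [if_pos h]
      simp only [r] at h
      obtain ⟨⟨⟨hab, -⟩, ⟨hcd, hlt⟩, hac, had, hbc, hbd⟩, hac'⟩ := h
      rw [hn a b c d hab hcd hac had hbc hbd, if_pos hac', if_pos (hac'.trans hlt)]
      rcases lt_or_gt_of_ne hbc with h | h
      · simp [h.not_gt, h, h.trans hlt, CharTwo.add_self_eq_zero]
      · simp [hab, hcd, hac', h, h.not_gt, CharTwo.add_self_eq_zero]
    · rw [if_neg h, if_neg]
      rintro ⟨hab, hcd, hac, hcb, hbd⟩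
      exact h ⟨⟨⟨hab, hac.trans hcb⟩, ⟨hcd, hcb.trans hbd⟩, hac.ne,
        (hac.trans (hcb.trans hbd)).ne, hcb.ne', hbd.ne⟩, hac⟩
  case even =>
    by_cases he : H.Adj e.1 e.2 ∧ e.1 < e.2
    · refine Eq.trans (Finset.sum_congr rfl fun f _ => if_congr ?_ rfl rfl)
        (sum_disjoint_edges_eq_zero e.1 e.2 he.1 heven (n e))
      simp only [r]
      tauto
    · exact Finset.sum_eq_zero fun f _ => if_neg fun h => he h.1

theorem isEmpty_drawing_completeGraph_five : IsEmpty (Drawing (completeGraph (Fin 5))) :=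
  ⟨fun D => absurd (D.even_card_interleaved (by decide)) (by decide +kernel)⟩

theorem isEmpty_drawing_completeBipartiteGraph_three_three :
    IsEmpty (Drawing (completeBipartiteGraph (Fin 3) (Fin 3))) := by
  let : LinearOrder (Fin 3 ⊕ Fin 3) := inferInstanceAs (LinearOrder (Fin 3 ⊕ₗ Fin 3))
  let : DecidableRel (completeBipartiteGraph (Fin 3) (Fin 3)).Adj :=
    fun _ _ => inferInstanceAs (Decidable (_ ∨ _))
  exact ⟨fun D => absurd (D.even_card_interleaved (by decide)) (by decide +kernel)⟩

end Drawing

section Reachability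

variable {V : Type*} {G : SimpleGraph V} {S T : Set V} {u v w : V}

/-- `v` can be reached from `u` by a walk of `G` that stays in `S`. -/
def ReachableIn (G : SimpleGraph V) (S : Set V) (u v : V) : Prop :=
  ∃ (hu : u ∈ S) (hv : v ∈ S), (G.induce S).Reachable ⟨u, hu⟩ ⟨v, hv⟩

/-- The vertex set of the component of `u` in the subgraph induced by `S`
(empty if `u ∉ S`). -/
def componentIn (G : SimpleGraph V) (S : Set V) (u : V) : Set V := {v | ReachableIn G S u v}

/-- Some edge of `G` joins `S` to `T`. -/
def Touch (G : SimpleGraph V) (S T : Set V) : Prop := ∃ u ∈ S, ∃ v ∈ T, G.Adj u v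

/-- The vertices outside `S` that have a neighbour in `S`. -/
def outerBoundary (G : SimpleGraph V) (S : Set V) : Set V := {v | v ∉ S ∧ ∃ u ∈ S, G.Adj u v}

namespace ReachableIn

theorem left_mem (h : ReachableIn G S u v) : u ∈ S := h.1

theorem right_mem (h : ReachableIn G S u v) : v ∈ S := h.2.1

theorem refl (hu : u ∈ S) : ReachableIn G S u u := ⟨hu, hu, .rfl⟩

theorem of_adj (hu : u ∈ S) (hv : v ∈ S) (h : G.Adj u v) : ReachableIn G S u v :=
  ⟨hu, hv, Adj.reachable (induce_adj.2 h)⟩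

theorem symm (h : ReachableIn G S u v) : ReachableIn G S v u :=
  ⟨h.right_mem, h.left_mem, h.2.2.symm⟩

theorem trans (h : ReachableIn G S u v) (h' : ReachableIn G S v w) : ReachableIn G S u w :=
  ⟨h.left_mem, h'.right_mem, h.2.2.trans h'.2.2⟩

theorem mono (hST : S ⊆ T) (h : ReachableIn G S u v) : ReachableIn G T u v :=
  ⟨hST h.left_mem, hST h.right_mem, h.2.2.map (G.induceHomOfLE hST).toHom⟩

theorem map (α : G ≃g G) (h : ReachableIn G S u v) : ReachableIn G (α '' S) (α u) (α v) :=
  ⟨⟨u, h.left_mem, rfl⟩, ⟨v, h.right_mem, rfl⟩,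
    h.2.2.map (induceHom α.toHom (Set.mapsTo_image α S))⟩

theorem mem_of_closed (h : ReachableIn G S u v) (hu : u ∈ T)
    (hT : ∀ x ∈ S, ∀ y ∈ S, G.Adj x y → x ∈ T → y ∈ T) : v ∈ T := by
  obtain ⟨hu', hv', ⟨p⟩⟩ := h
  by_contra hv
  obtain ⟨d, -, hd, hd'⟩ := p.exists_boundary_dart {x | x.1 ∈ T} hu hv
  exact hd' (hT _ d.fst.2 _ d.snd.2 d.adj hd)

theorem in_component (h : ReachableIn G S u v) : ReachableIn G (componentIn G S u) u v :=
  h.mem_of_closed (T := componentIn G (componentIn G S u) u) (.refl (.refl h.left_mem))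
    fun _ _ _ hy hxy hx => hx.trans
      (.of_adj hx.right_mem (hx.right_mem.trans (.of_adj hx.right_mem.right_mem hy hxy)) hxy)

theorem inter_or_exists_exit (h : ReachableIn G S u v) (hu : u ∈ T) :
    ReachableIn G (S ∩ T) u v ∨ ∃ p q, ReachableIn G (S ∩ T) u p ∧ q ∈ S \ T ∧ G.Adj p q := by
  by_contra! hcon
  refine hcon.1 (h.mem_of_closed (T := componentIn G (S ∩ T) u) (.refl ⟨h.left_mem, hu⟩)
    fun x _ y hy hxy hx => hx.trans (.of_adj hx.right_mem ⟨hy, ?_⟩ hxy))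
  by_contra hyT
  exact hcon.2 x y hx ⟨hy, hyT⟩ hxy

theorem exists_exit (h : ReachableIn G S u v) (hu : u ∈ T) (hv : v ∉ T) :
    ∃ p q, ReachableIn G (S ∩ T) u p ∧ q ∈ S \ T ∧ G.Adj p q :=
  (h.inter_or_exists_exit hu).resolve_left fun h' => hv h'.right_mem.2

end ReachableIn

theorem Touch.symm (h : Touch G S T) : Touch G T S := by
  obtain ⟨u, hu, v, hv, h⟩ := h
  exact ⟨v, hv, u, hu, h.symm⟩

theorem Touch.mono {S' T' : Set V} (h : Touch G S T) (hS : S ⊆ S') (hT : T ⊆ T') :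
    Touch G S' T' := by
  obtain ⟨u, hu, v, hv, h⟩ := h
  exact ⟨u, hS hu, v, hT hv, h⟩

theorem componentIn_subset : componentIn G S u ⊆ S := fun _ h => h.right_mem

theorem reachableIn_of_connected (hS : (G.induce S).Connected) (hu : u ∈ S) (hv : v ∈ S) :
    ReachableIn G S u v :=
  ⟨hu, hv, hS.preconnected _ _⟩

theorem connected_of_forall_reachableIn (hu : u ∈ S) (h : ∀ v ∈ S, ReachableIn G S u v) :
    (G.induce S).Connected :=
  (connected_iff_exists_forall_reachable _).2 ⟨⟨u, hu⟩, fun v => (h v v.2).2.2⟩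

theorem connected_componentIn (hu : u ∈ S) : (G.induce (componentIn G S u)).Connected :=
  connected_of_forall_reachableIn (.refl hu) fun _ h => h.in_component

theorem touch_componentIn_sdiff (hS : (G.induce S).Connected) (hu : u ∈ S \ T) (hv : v ∈ S)
    (hvT : v ∈ T) : Touch G (componentIn G (S \ T) u) T := by
  obtain ⟨p, q, hp, hq, hpq⟩ :=
    (reachableIn_of_connected hS hu.1 hv).exists_exit (T := Tᶜ) hu.2 (not_not.2 hvT)
  exact ⟨p, hp, q, not_not.1 hq.2, hpq⟩

theorem connected_singleton (u : V) : (G.induce {u}).Connected :=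
  connected_of_forall_reachableIn rfl fun _ hv => hv ▸ .refl rfl

theorem connected_union_of_touch (hS : (G.induce S).Connected) (hT : (G.induce T).Connected)
    (h : Touch G S T) : (G.induce (S ∪ T)).Connected := by
  obtain ⟨u, hu, v, hv, h⟩ := h
  exact connected_induce_union hS.preconnected hT.preconnected hu hv h

theorem connected_union_of_mem (hS : (G.induce S).Connected) (hT : (G.induce T).Connected)
    (hu : u ∈ S) (hu' : u ∈ T) : (G.induce (S ∪ T)).Connected :=
  induce_union_connected hS.preconnected hT.preconnected ⟨u, hu, hu'⟩

theorem connected_image (α : G ≃g G) (hS : (G.induce S).Connected) :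
    (G.induce (α '' S)).Connected :=
  (Iso.connected_iff (α.induce α.injective.injOn.bijOn_image)).1 hS

end Reachability

section Minor

variable {V ι : Type*} {G : SimpleGraph V} {H : SimpleGraph ι}

/-- A model of `H` as a minor of `G`: disjoint connected branch sets, one for each vertex
of `H`, such that adjacent vertices have touching branch sets. -/
structure MinorModel (H : SimpleGraph ι) (G : SimpleGraph V) where
  branch : ι → Set V
  connected (i) : (G.induce (branch i)).Connected
  disjoint {i j} : i ≠ j → Disjoint (branch i) (branch j)
  touch {i j} : H.Adj i j → Touch G (branch i) (branch j)

namespace PlanarEmbedding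

/-- The point set of the subgraph induced by `S`. -/
def region (emb : PlanarEmbedding G) (S : Set V) : Set (ℝ × ℝ) :=
  emb.vpos '' S ∪ {x | ∃ (u v : V) (h : G.Adj u v), u ∈ S ∧ v ∈ S ∧ x ∈ emb.arc h}

theorem disjoint_region (emb : PlanarEmbedding G) {S T : Set V} (h : Disjoint S T) :
    Disjoint (emb.region S) (emb.region T) := by
  have hne {v w : V} (hv : v ∈ S) (hw : w ∈ T) : v ≠ w := fun e => Set.disjoint_left.1 h hv (e ▸ hw)
  rw [Set.disjoint_left]
  rintro x (⟨v, hv, rfl⟩ | ⟨u, v, ha, hu, hv, hx⟩) (⟨w, hw, hwx⟩ | ⟨u', v', ha', hu', hv', hx'⟩)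
  · exact hne hv hw (emb.vinj hwx.symm)
  · rcases emb.arc_vertex ha' v hx' with e | e
    exacts [hne hv hu' e, hne hv hv' e]
  · subst hwx
    rcases emb.arc_vertex ha w hx with e | e
    exacts [hne hu hw e.symm, hne hv hw e.symm]
  · have distinct : s(u, v) ≠ s(u', v') := fun e => by
      rcases Sym2.eq_iff.1 e with ⟨e, -⟩ | ⟨e, -⟩
      exacts [hne hu hu' e, hne hu hv' e]
    obtain ⟨y, ⟨hy, hy'⟩, -⟩ := emb.arc_inter ha ha' distinct ⟨hx, hx'⟩
    have hyS : y ∈ S := by rcases hy with rfl | rfl <;> assumption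
    have hyT : y ∈ T := by rcases hy' with rfl | rfl <;> assumption
    exact hne hyS hyT rfl

theorem joinedIn_region (emb : PlanarEmbedding G) {S : Set V} {u v : V}
    (h : ReachableIn G S u v) : JoinedIn (emb.region S) (emb.vpos u) (emb.vpos v) := by
  refine h.mem_of_closed (T := {v | JoinedIn (emb.region S) (emb.vpos u) (emb.vpos v)})
    (.refl (Or.inl ⟨u, h.left_mem, rfl⟩)) fun x hx y hy hxy hux => ?_
  obtain ⟨f, -, hf⟩ := emb.arc_isArc hxy
  exact hux.trans ⟨f, fun t => Or.inr ⟨x, y, hxy, hx, hy, hf ▸ ⟨t, rfl⟩⟩⟩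

theorem nonempty_drawing (emb : PlanarEmbedding G) (M : MinorModel H G) :
    Nonempty (Drawing H) := by
  choose v hv using fun i => Set.nonempty_coe_sort.1 (M.connected i).nonempty
  have route (a b : ι) : ∃ q : ℝ → ℝ × ℝ, H.Adj a b → Continuous q ∧ q 0 = emb.vpos (v a) ∧
      q 1 = emb.vpos (v b) ∧ ∀ s, q s ∈ emb.region (M.branch a ∪ M.branch b) := by
    by_cases h : H.Adj a b
    · obtain ⟨f, hf⟩ := emb.joinedIn_region (reachableIn_of_connected
        (connected_union_of_touch (M.connected a) (M.connected b) (M.touch h))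
        (Or.inl (hv a)) (Or.inr (hv b)))
      refine ⟨f.extend, fun _ => ⟨f.continuous_extend, f.extend_zero, f.extend_one, fun s => ?_⟩⟩
      obtain ⟨t, ht⟩ : f.extend s ∈ Set.range f := f.extend_range ▸ ⟨s, rfl⟩
      exact ht ▸ hf t
    · exact ⟨0, fun h' => absurd h' h⟩
  choose q hq using route
  let Φ := Complex.equivRealProdCLM.symm
  exact ⟨{
    point := fun i => Φ (emb.vpos (v i))
    point_injective := fun i j hij => by
      by_contra hne
      exact Set.disjoint_left.1 (M.disjoint hne) (hv i) (emb.vinj (Φ.injective hij) ▸ hv j)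
    curve := fun a b s => Φ (q a b s)
    continuous_curve := fun h => Φ.continuous.comp (hq _ _ h).1
    curve_zero := fun h => congrArg Φ (hq _ _ h).2.1
    curve_one := fun h => congrArg Φ (hq _ _ h).2.2.1
    curve_ne_point := fun {a b c} h hac hbc s e => by
      refine Set.disjoint_left.1 (emb.disjoint_region (T := M.branch c) ?_) ((hq a b h).2.2.2 s)
        (Φ.injective e ▸ Or.inl ⟨_, hv c, rfl⟩)
      exact (M.disjoint hac).union_left (M.disjoint hbc)
    curve_ne_curve := fun {a b c d} h h' hac had hbc hbd s t e => by
      refine Set.disjoint_left.1 (emb.disjoint_region ?_) ((hq a b h).2.2.2 s)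
        (Φ.injective e ▸ (hq c d h').2.2.2 t)
      exact ((M.disjoint hac).union_right (M.disjoint had)).union_left
        ((M.disjoint hbc).union_right (M.disjoint hbd)) }⟩

theorem isEmpty_minorModel_five (emb : PlanarEmbedding G) :
    IsEmpty (MinorModel (completeGraph (Fin 5)) G) :=
  ⟨fun M => isEmpty_drawing_completeGraph_five.elim (emb.nonempty_drawing M).some⟩

theorem isEmpty_minorModel_three_three (emb : PlanarEmbedding G) :
    IsEmpty (MinorModel (completeBipartiteGraph (Fin 3) (Fin 3)) G) :=
  ⟨fun M => isEmpty_drawing_completeBipartiteGraph_three_three.elim (emb.nonempty_drawing M).some⟩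

end PlanarEmbedding

end Minor

section Attachment

variable {V : Type*} {G : SimpleGraph V} {X Y S T : Set V} {x : V}

/-- The vertices of `S` that can be reached from `X` by a walk whose inner vertices and end lie
in `S`. -/
def attachment (G : SimpleGraph V) (X S : Set V) : Set V :=
  {w | ∃ p ∈ X, ∃ u, G.Adj p u ∧ ReachableIn G S u w}

/-- Some walk with at least one inner vertex leads from `X` to `Y` with all its inner vertices
in `S`. -/
def Linked (G : SimpleGraph V) (X Y S : Set V) : Prop :=
  (attachment G X S ∩ attachment G Y S).Nonempty

theorem attachment_subset : attachment G X S ⊆ S := fun _ ⟨_, _, _, _, h⟩ => h.right_mem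

theorem mem_attachment_of_adj {p q : V} (hp : p ∈ X ∪ attachment G X S) (hpq : G.Adj p q)
    (hq : q ∈ S) : q ∈ attachment G X S := by
  rcases hp with hp | ⟨r, hr, u, hu, h⟩
  · exact ⟨p, hp, q, hpq, .refl hq⟩
  · exact ⟨r, hr, u, hu, h.trans (.of_adj h.right_mem hq hpq)⟩

theorem componentIn_subset_attachment {w : V} (hw : w ∈ attachment G X S) :
    componentIn G S w ⊆ attachment G X S := by
  obtain ⟨p, hp, u, hu, h⟩ := hw
  exact fun y hy => ⟨p, hp, u, hu, h.trans hy⟩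

theorem connected_union_attachment (hX : (G.induce X).Connected) :
    (G.induce (X ∪ attachment G X S)).Connected := by
  obtain ⟨c, hc⟩ := Set.nonempty_coe_sort.1 hX.nonempty
  refine connected_of_forall_reachableIn (Or.inl hc) ?_
  rintro w (hw | ⟨p, hp, u, hu, h⟩)
  · exact (reachableIn_of_connected hX hc hw).mono Set.subset_union_left
  · have hu' : u ∈ attachment G X S := ⟨p, hp, u, hu, .refl h.left_mem⟩
    have hpu : ReachableIn G (X ∪ attachment G X S) p u := .of_adj (Or.inl hp) (Or.inr hu') hu
    exact ((reachableIn_of_connected hX hc hp).mono Set.subset_union_left).trans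
      (hpu.trans (h.in_component.mono
        ((componentIn_subset_attachment hu').trans Set.subset_union_right)))

theorem image_attachment_subset (α : G ≃g G) :
    α '' attachment G X S ⊆ attachment G (α '' X) (α '' S) := by
  rintro _ ⟨w, ⟨p, hp, u, hu, h⟩, rfl⟩
  exact ⟨α p, ⟨p, hp, rfl⟩, α u, α.map_adj_iff.2 hu, h.map α⟩

theorem attachment_image (α : G ≃g G) :
    attachment G (α '' X) (α '' S) = α '' attachment G X S := by
  refine Set.Subset.antisymm (fun w hw => ⟨α.symm w, ?_, by simp⟩) (image_attachment_subset α)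
  have := image_attachment_subset α.symm ⟨w, hw, rfl⟩
  simpa [Set.image_image] using this

theorem Linked.symm (h : Linked G X Y S) : Linked G Y X S := by
  rwa [Linked, Set.inter_comm]

theorem Linked.image (α : G ≃g G) (h : Linked G X Y S) :
    Linked G (α '' X) (α '' Y) (α '' S) := by
  rw [Linked, attachment_image, attachment_image, ← Set.image_inter α.injective]
  exact Set.Nonempty.image α h

theorem linked_of_reachableIn {p q u v : V} (hp : p ∈ X) (hpu : G.Adj p u) (hq : q ∈ Y)
    (hqv : G.Adj q v) (h : ReachableIn G S u v) : Linked G X Y S :=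
  ⟨v, ⟨p, hp, u, hpu, h⟩, q, hq, v, hqv, .refl h.right_mem⟩

theorem Linked.exists_reachableIn (h : Linked G X Y S) :
    ∃ p ∈ X, ∃ u v, ∃ q ∈ Y, G.Adj p u ∧ G.Adj q v ∧ ReachableIn G S u v := by
  obtain ⟨w, ⟨p, hp, u, hu, hw⟩, q, hq, v, hv, hw'⟩ := h
  exact ⟨p, hp, u, v, q, hq, hu, hv, hw.trans hw'.symm⟩

theorem disjoint_union_attachment (hXY : Disjoint X Y) (hXS : Disjoint X S) (hYS : Disjoint Y S)
    (h : ¬ Linked G X Y S) :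
    Disjoint (X ∪ attachment G X S) (Y ∪ attachment G Y S) :=
  (hXY.union_right (hXS.mono_right attachment_subset)).union_left
    ((hYS.symm.mono_left attachment_subset).union_right
      (Set.disjoint_iff_inter_eq_empty.2 (Set.not_nonempty_iff_eq_empty.1 h)))

theorem Linked.touch_of_not_linked_sdiff (h : Linked G X Y S) (hx : ¬ Linked G X Y (S \ {x})) :
    Touch G (X ∪ attachment G X (S \ {x})) {x} := by
  obtain ⟨p, hp, u, v, q, hq, hu, hv, huv⟩ := h.exists_reachableIn
  by_cases hux : u = x
  · exact ⟨p, Or.inl hp, u, hux, hu⟩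
  rcases huv.inter_or_exists_exit (T := {x}ᶜ) hux with huv | ⟨r, s, hur, hs, hrs⟩
  · exact absurd (linked_of_reachableIn hp hu hq hv huv) hx
  · exact ⟨r, Or.inr ⟨p, hp, u, hu, hur⟩, s, not_not.1 hs.2, hrs⟩

theorem Linked.exists_bridge (hT : Linked G X Y T) (hS : ¬ Linked G X Y S)
    (hXT : Disjoint X T) (hYT : Disjoint Y T) :
    ∃ n w, ReachableIn G (T \ ((X ∪ attachment G X S) ∪ (Y ∪ attachment G Y S))) n w ∧
      Touch G (X ∪ attachment G X S) {n} ∧ Touch G (Y ∪ attachment G Y S) {w} := by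
  set A := X ∪ attachment G X S
  set B := Y ∪ attachment G Y S
  have separated {y z : V} (hy : y ∈ A) (hz : z ∈ B) (hzT : z ∈ T) : ¬ G.Adj y z := fun hyz =>
    have hz' := hz.resolve_left fun hzY => Set.disjoint_left.1 hYT hzY hzT
    hS ⟨z, mem_attachment_of_adj hy hyz (attachment_subset hz'), hz'⟩
  have separated' {y z : V} (hy : y ∈ A) (hz : z ∈ B) (hyT : y ∈ T) : ¬ G.Adj z y := fun hzy =>
    have hy' := hy.resolve_left fun hyX => Set.disjoint_left.1 hXT hyX hyT
    hS ⟨y, hy', mem_attachment_of_adj hz hzy (attachment_subset hy')⟩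
  obtain ⟨p, hp, u, v, q, hq, hu, hv, huv⟩ := hT.exists_reachableIn
  by_contra! hcon
  have hvA : v ∉ A := fun h => separated' h (Or.inl hq) huv.right_mem hv
  -- Along the walk one stays in `A` or in components of `T \ (A ∪ B)` next to `A`.
  have closed : v ∈ A ∪ {y | ∃ n, Touch G A {n} ∧ ReachableIn G (T \ (A ∪ B)) n y} := by
    have enter {y z : V} (hy : y ∈ A) (hyz : G.Adj y z) (hz : z ∈ T) :
        z ∈ A ∪ {y | ∃ n, Touch G A {n} ∧ ReachableIn G (T \ (A ∪ B)) n y} := by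
      by_cases hzA : z ∈ A
      · exact Or.inl hzA
      · exact Or.inr ⟨z, ⟨y, hy, z, rfl, hyz⟩, .refl ⟨hz, fun h => h.elim hzA
          fun hzB => separated hy hzB hz hyz⟩⟩
    refine huv.mem_of_closed (enter (Or.inl hp) hu huv.left_mem) fun y _ z hz hyz hy => ?_
    rcases hy with hy | ⟨n, hn, hny⟩
    · exact enter hy hyz hz
    by_cases hzA : z ∈ A
    · exact Or.inl hzA
    · exact Or.inr ⟨n, hn, hny.trans (.of_adj hny.right_mem ⟨hz, fun h => h.elim hzA fun hzB =>
        hcon n y hny hn ⟨z, hzB, y, rfl, hyz.symm⟩⟩ hyz)⟩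
  obtain ⟨n, hn, hnv⟩ := closed.resolve_left hvA
  exact hcon n v hnv hn ⟨q, Or.inl hq, v, rfl, hv⟩

end Attachment

section CutVertex

variable {V : Type*} {G : SimpleGraph V} {X Y S : Set V} {x x' : V}

theorem Linked.mem_attachment_or_mem_attachment (h : Linked G X Y S) (hxS : x ∈ S)
    (hxS' : x' ∈ S) (hne : x ≠ x') (hx : ¬ Linked G X Y (S \ {x})) :
    x ∈ attachment G X (S \ {x'}) ∨ x' ∈ attachment G X (S \ {x}) := by
  obtain ⟨p, hp, u, v, q, hq, hu, hv, huv⟩ := h.exists_reachableIn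
  by_cases hux : u = x
  · exact Or.inl (mem_attachment_of_adj (Or.inl hp) (hux ▸ hu) ⟨hxS, hne⟩)
  by_cases hux' : u = x'
  · exact Or.inr (mem_attachment_of_adj (Or.inl hp) (hux' ▸ hu) ⟨hxS', hne.symm⟩)
  have avoid {w : V} (hw : ReachableIn G (S ∩ {x, x'}ᶜ) u w) :
      ReachableIn G (S \ {x}) u w ∧ ReachableIn G (S \ {x'}) u w :=
    ⟨hw.mono fun y hy => ⟨hy.1, fun e => hy.2 (Or.inl e)⟩,
      hw.mono fun y hy => ⟨hy.1, fun e => hy.2 (Or.inr e)⟩⟩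
  rcases huv.inter_or_exists_exit (T := {x, x'}ᶜ) (by simp [hux, hux']) with
    huv | ⟨r, s, hur, ⟨hsS, hs⟩, hrs⟩
  · exact absurd (linked_of_reachableIn hp hu hq hv (avoid huv).1) hx
  rcases not_not.1 hs with rfl | rfl
  · exact Or.inl (mem_attachment_of_adj (Or.inr ⟨p, hp, u, hu, (avoid hur).2⟩) hrs ⟨hsS, hne⟩)
  · exact Or.inr (mem_attachment_of_adj (Or.inr ⟨p, hp, u, hu, (avoid hur).1⟩) hrs
      ⟨hsS, hne.symm⟩)

theorem Linked.attachment_ssubset (h : Linked G X Y S) (hxS : x ∈ S) (hxS' : x' ∈ S)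
    (hne : x ≠ x') (hx : ¬ Linked G X Y (S \ {x})) (hx' : ¬ Linked G X Y (S \ {x'}))
    (hmem : x ∈ attachment G X (S \ {x'})) :
    attachment G X (S \ {x}) ⊂ attachment G X (S \ {x'}) := by
  have hmem' : x' ∈ attachment G Y (S \ {x}) :=
    (h.symm.mem_attachment_or_mem_attachment hxS hxS' hne fun h => hx h.symm).resolve_left
      fun h' => hx' ⟨x, hmem, h'⟩
  refine ⟨?_, fun hsub => (attachment_subset (hsub hmem)).2 rfl⟩
  rintro w ⟨p, hp, u, hu, huw⟩
  refine ⟨p, hp, u, hu, huw.in_component.mono fun y hy => ⟨hy.right_mem.1, ?_⟩⟩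
  rintro rfl
  exact hx ⟨y, ⟨p, hp, u, hu, hy⟩, hmem'⟩

-- The vertices of `S` separating `X` from `Y` are linearly ordered by the size of the part they
-- cut off at `X`, and an automorphism preserves this size.
theorem Linked.fixes_cut_vertex (α : G ≃g G) (hX : α '' X = X) (hY : α '' Y = Y)
    (hS : α '' S = S) (hfin : S.Finite) (h : Linked G X Y S) (hxS : x ∈ S)
    (hx : ¬ Linked G X Y (S \ {x})) : α x = x := by
  have hS' : S \ {α x} = α '' (S \ {x}) := by
    rw [Set.image_sdiff α.injective, hS, Set.image_singleton]
  have hαx : ¬ Linked G X Y (S \ {α x}) := fun h' => hx <| by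
    have := h'.image α.symm
    rwa [hS', ← hX, ← hY, Set.image_image, Set.image_image, Set.image_image,
      funext α.symm_apply_apply, Set.image_id', Set.image_id', Set.image_id'] at this
  have hcard : (attachment G X (S \ {α x})).ncard = (attachment G X (S \ {x})).ncard := by
    conv_lhs => rw [hS', ← hX, attachment_image, Set.ncard_image_of_injective _ α.injective]
  have hfin' (y : V) : (attachment G X (S \ {y})).Finite :=
    hfin.subset (attachment_subset.trans Set.sdiff_subset)
  have hαxS : α x ∈ S := hS ▸ ⟨x, hxS, rfl⟩
  by_contra hne
  rcases h.mem_attachment_or_mem_attachment hxS hαxS (Ne.symm hne) hx with hmem | hmem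
  · exact (Set.ncard_lt_ncard (h.attachment_ssubset hxS hαxS (Ne.symm hne) hx hαx hmem)
      (hfin' _)).ne hcard.symm
  · exact (Set.ncard_lt_ncard (h.attachment_ssubset hαxS hxS hne hαx hx hmem)
      (hfin' _)).ne hcard

end CutVertex

section Theta

variable {V : Type*} {G : SimpleGraph V}

/-- The model of a complete bipartite graph with the given branch sets. -/
def MinorModel.bipartite {ι κ : Type*} (P : ι → Set V) (Q : κ → Set V)
    (connected_left : ∀ i, (G.induce (P i)).Connected)
    (connected_right : ∀ k, (G.induce (Q k)).Connected)
    (disjoint_left : ∀ i j, i ≠ j → Disjoint (P i) (P j))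
    (disjoint_right : ∀ k l, k ≠ l → Disjoint (Q k) (Q l))
    (disjoint_left_right : ∀ i k, Disjoint (P i) (Q k))
    (touch : ∀ i k, Touch G (P i) (Q k)) : MinorModel (completeBipartiteGraph ι κ) G where
  branch := Sum.elim P Q
  connected := Sum.rec connected_left connected_right
  disjoint {i j} h := match i, j with
    | .inl i, .inl j => disjoint_left i j fun e => h (congrArg _ e)
    | .inl i, .inr k => disjoint_left_right i k
    | .inr k, .inl i => (disjoint_left_right i k).symm
    | .inr k, .inr l => disjoint_right k l fun e => h (congrArg _ e)
  touch {i j} h := match i, j with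
    | .inl i, .inr k => touch i k
    | .inr k, .inl i => (touch i k).symm
    | .inl _, .inl _ => by simp at h
    | .inr _, .inr _ => by simp at h

theorem PlanarEmbedding.not_third_hub (emb : PlanarEmbedding G)
    (M : MinorModel (completeBipartiteGraph (Fin 3) (Fin 2)) G) {F : Set V}
    (hF : (G.induce F).Connected) (hdisj : ∀ x, Disjoint (M.branch x) F)
    (htouch : ∀ i, Touch G (M.branch (.inl i)) F) : False := by
  let Q : Fin 3 → Set V := Fin.cons F fun k => M.branch (.inr k)
  refine emb.isEmpty_minorModel_three_three.false (.bipartite (fun i => M.branch (.inl i)) Q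
    (fun i => M.connected _) (Fin.cases hF fun k => M.connected _)
    (fun i j h => M.disjoint (by simpa using h)) ?_ (fun i => Fin.cases (hdisj _) fun k =>
      M.disjoint (by simp)) fun i => Fin.cases (htouch i) fun k => M.touch (by simp))
  refine Fin.cases (Fin.cases (by simp) fun l _ => (hdisj _).symm) fun k => Fin.cases
    (fun _ => hdisj _) fun l h => M.disjoint (by simpa using h)

/-- A theta graph rooted at three terminals, up to minors: three disjoint connected spokes, the
`i`-th one containing the terminal `t i`, and two disjoint connected hubs, each of them touching
every spoke. Apart from the terminals, it lies in `U`. -/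
structure RootedTheta (G : SimpleGraph V) (U : Set V) (t : Fin 3 → V) extends
    MinorModel (completeBipartiteGraph (Fin 3) (Fin 2)) G where
  root_mem (i) : t i ∈ branch (.inl i)
  spoke_subset (i) : branch (.inl i) ⊆ insert (t i) U
  hub_subset (k) : branch (.inr k) ⊆ U

/-- The `i`-th spoke of a rooted theta graph. -/
abbrev RootedTheta.spoke {U : Set V} {t : Fin 3 → V} (θ : RootedTheta G U t) (i : Fin 3) :
    Set V := θ.branch (.inl i)

/-- The `k`-th hub of a rooted theta graph. -/
abbrev RootedTheta.hub {U : Set V} {t : Fin 3 → V} (θ : RootedTheta G U t) (k : Fin 2) :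
    Set V := θ.branch (.inr k)

/-- The same rooted theta graph, regarded as lying in a larger set. -/
def RootedTheta.mono {U U' : Set V} {t : Fin 3 → V} (θ : RootedTheta G U t) (h : U ⊆ U') :
    RootedTheta G U' t :=
  { θ with
    spoke_subset := fun i => (θ.spoke_subset i).trans (Set.insert_subset_insert h)
    hub_subset := fun k => (θ.hub_subset k).trans h }

end Theta

section FixedPointFree

theorem forall_ne_disjoint_two {α : Type*} {A B : Set α} (h : Disjoint A B) (i j : Fin 2)
    (hij : i ≠ j) : Disjoint (![A, B] i) (![A, B] j) := by
  fin_cases i <;> fin_cases j <;> simp_all [disjoint_comm]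

theorem forall_ne_disjoint_three {α : Type*} {A B C : Set α} (hAB : Disjoint A B)
    (hAC : Disjoint A C) (hBC : Disjoint B C) (i j : Fin 3) (hij : i ≠ j) :
    Disjoint (![A, B, C] i) (![A, B, C] j) := by
  fin_cases i <;> fin_cases j <;> simp_all [disjoint_comm]

variable {V : Type*} {G : SimpleGraph V} {C J K K' : Set V} {t : Fin 3 → V} {x : V}

/-- A connected part of `C` at the third terminal that some path between the other two terminals
through `C` avoids. -/
structure IsAvoidable (G : SimpleGraph V) (C : Set V) (t : Fin 3 → V) (K : Set V) : Prop where
  root_mem : t 2 ∈ K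
  subset : K ⊆ insert (t 2) C
  connected : (G.induce K).Connected
  linked : Linked G {t 0} {t 1} (C \ K)

namespace IsAvoidable

theorem image (h : IsAvoidable G C t K) (α : G ≃g G) (hC : α '' C = C) (ht : ∀ i, α (t i) = t i) :
    IsAvoidable G C t (α '' K) where
  root_mem := ⟨t 2, h.root_mem, ht 2⟩
  subset := by
    have := Set.image_mono (f := α) h.subset
    rwa [Set.image_insert_eq, hC, ht] at this
  connected := connected_image α h.connected
  linked := by
    have := h.linked.image α
    rwa [Set.image_singleton, Set.image_singleton, ht, ht, Set.image_sdiff α.injective, hC] at this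

theorem not_linked_of_maximal (h : Maximal (IsAvoidable G C t) K) (hxC : x ∈ C) (hxK : x ∉ K)
    (hx : Touch G K {x}) : ¬ Linked G {t 0} {t 1} ((C \ K) \ {x}) := fun hl =>
  hxK <| h.2 (y := K ∪ {x})
    { root_mem := Or.inl h.1.root_mem
      subset := Set.union_subset h.1.subset (Set.singleton_subset_iff.2 (Or.inr hxC))
      connected := connected_union_of_touch h.1.connected (connected_singleton x) hx
      linked := by rwa [Set.sdiff_sdiff] at hl } Set.subset_union_left (Or.inr rfl)

/-- The part of `C` outside `K` on the side of the terminal `t i` of a vertex `x`. -/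
def side (G : SimpleGraph V) (C : Set V) (t : Fin 3 → V) (K : Set V) (x : V) (i : Fin 3) : Set V :=
  {t i} ∪ attachment G {t i} ((C \ K) \ {x})

theorem side_subset {i : Fin 3} : side G C t K x i ⊆ insert (t i) ((C \ K) \ {x}) :=
  Set.union_subset_union_right _ attachment_subset

theorem connected_side {i : Fin 3} : (G.induce (side G C t K x i)).Connected :=
  connected_union_attachment (connected_singleton _)

theorem disjoint_side (ht : t.Injective) (htC : ∀ i, t i ∉ C)
    (hx : ¬ Linked G {t 0} {t 1} ((C \ K) \ {x})) :
    Disjoint (side G C t K x 0) (side G C t K x 1) :=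
  disjoint_union_attachment (by simpa using ht.ne (by decide))
    (Set.disjoint_singleton_left.2 fun hi => htC 0 hi.1.1)
    (Set.disjoint_singleton_left.2 fun hi => htC 1 hi.1.1) hx

theorem disjoint_side_of_subset {i : Fin 3} (h : IsAvoidable G C t K) (ht : t.Injective)
    (htC : ∀ i, t i ∉ C) (hJ : J ⊆ K) (hi : i ≠ 2) : Disjoint (side G C t K x i) J := by
  refine Set.disjoint_left.2 fun y hy hyJ => ?_
  rcases side_subset hy with rfl | hy
  · exact (h.subset (hJ hyJ)).elim (ht.ne hi) (htC i)
  · exact hy.1.2 (hJ hyJ)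

theorem exists_crossing (h : IsAvoidable G C t K') (htC : ∀ i, t i ∉ C) (hxK' : x ∈ K')
    (hx : ¬ Linked G {t 0} {t 1} ((C \ K) \ {x})) :
    ∃ N ⊆ C \ K', (G.induce N).Connected ∧ (N ∩ K).Nonempty ∧
      ∀ i, i ≠ 2 → Disjoint (side G C t K x i) N ∧ Touch G (side G C t K x i) N := by
  have disjoint_root (i) : Disjoint {t i} (C \ K') :=
    Set.disjoint_singleton_left.2 fun hi => htC i hi.1
  obtain ⟨n, w, hnw, h₀, h₁⟩ := h.linked.exists_bridge hx (disjoint_root 0) (disjoint_root 1)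
  have hn := hnw.left_mem
  have hnN : n ∈ componentIn G _ n := .refl hn
  refine ⟨_, componentIn_subset.trans Set.sdiff_subset, connected_componentIn hn,
    ⟨n, hnN, ?_⟩, fun i hi => ?_⟩
  · by_contra hnK
    obtain ⟨p, hp, _, rfl, hpn⟩ := h₀
    exact hn.2 (Or.inl (Or.inr (mem_attachment_of_adj hp hpn
      ⟨⟨hn.1.1, hnK⟩, fun e => hn.1.2 (e ▸ hxK')⟩)))
  · match i with
    | 0 => exact ⟨(Set.disjoint_sdiff_right.mono_left Set.subset_union_left).mono_right
        componentIn_subset, h₀.mono subset_rfl (Set.singleton_subset_iff.2 hnN)⟩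
    | 1 => exact ⟨(Set.disjoint_sdiff_right.mono_left Set.subset_union_right).mono_right
        componentIn_subset, h₁.mono subset_rfl (Set.singleton_subset_iff.2 hnw)⟩
    | 2 => exact absurd rfl hi

-- If the cut vertex `x` lies on a second avoidable set `K'`, then a path avoiding `K'` has to
-- cross `K`; the crossing is one hub and `x` is the other.
theorem nonempty_rootedTheta (h : IsAvoidable G C t K) (h' : IsAvoidable G C t K')
    (ht : t.Injective) (htC : ∀ i, t i ∉ C) (hxK' : x ∈ K') (hxK : x ∉ K)
    (htouch : Touch G (componentIn G (K ∩ K') (t 2)) {x})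
    (hx : ¬ Linked G {t 0} {t 1} ((C \ K) \ {x})) : Nonempty (RootedTheta G C t) := by
  have hxC : x ∈ C := (h'.subset hxK').resolve_left fun e => hxK (e ▸ h.root_mem)
  obtain ⟨N, hNC, hN, ⟨n, hnN, hnK⟩, hNA⟩ := h'.exists_crossing htC hxK' hx
  have hrN : t 2 ∉ N := fun h => htC 2 (hNC h).1
  set A := side G C t K x
  set J := componentIn G (K \ N) (t 2)
  have hAC (i) : A i ⊆ insert (t i) ((C \ K) \ {x}) := side_subset
  have hJ : J ⊆ K \ N := componentIn_subset
  have hAJ (i) (hi : i ≠ 2) : Disjoint (A i) J :=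
    h.disjoint_side_of_subset ht htC (hJ.trans Set.sdiff_subset) hi
  have hAx (i) : Disjoint (A i) {x} :=
    Set.disjoint_singleton_right.2 fun hy =>
      (hAC i hy).elim (fun e => htC i (e ▸ hxC)) fun h => h.2 rfl
  have hl : Linked G {t 0} {t 1} (C \ K) := h.linked
  have hJN : Touch G J N := touch_componentIn_sdiff h.connected ⟨h.root_mem, hrN⟩ hnK hnN
  have hJx : Touch G J {x} := htouch.mono (fun y hy => hy.mono fun z hz =>
    ⟨hz.1, fun hzN => (hNC hzN).2 hz.2⟩) subset_rfl
  exact ⟨{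
    toMinorModel := .bipartite ![A 0, A 1, J] ![{x}, N]
      (fun | 0 | 1 => connected_side | 2 => connected_componentIn ⟨h.root_mem, hrN⟩)
      (fun | 0 => connected_singleton x | 1 => hN)
      (forall_ne_disjoint_three (disjoint_side ht htC hx) (hAJ 0 (by decide)) (hAJ 1 (by decide)))
      (forall_ne_disjoint_two (Set.disjoint_singleton_left.2 fun hx => (hNC hx).2 hxK'))
      (fun
        | 0, 0 => hAx 0 | 1, 0 => hAx 1
        | 2, 0 => Set.disjoint_singleton_right.2 fun h => hxK (hJ h).1
        | 0, 1 => (hNA 0 (by decide)).1 | 1, 1 => (hNA 1 (by decide)).1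
        | 2, 1 => Set.disjoint_left.2 fun y hy => (hJ hy).2)
      (fun
        | 0, 0 => hl.touch_of_not_linked_sdiff hx
        | 1, 0 => hl.symm.touch_of_not_linked_sdiff fun h => hx h.symm
        | 2, 0 => hJx
        | 0, 1 => (hNA 0 (by decide)).2 | 1, 1 => (hNA 1 (by decide)).2 | 2, 1 => hJN)
    root_mem := fun | 0 => Or.inl rfl | 1 => Or.inl rfl | 2 => .refl ⟨h.root_mem, hrN⟩
    spoke_subset := fun
      | 0 => (hAC 0).trans (Set.insert_subset_insert fun y hy => hy.1.1)
      | 1 => (hAC 1).trans (Set.insert_subset_insert fun y hy => hy.1.1)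
      | 2 => fun y hy => h.subset (hJ hy).1
    hub_subset := fun
      | 0 => Set.singleton_subset_iff.2 hxC
      | 1 => fun y hy => (hNC hy).1 }⟩

theorem subset_of_maximal (h : Maximal (IsAvoidable G C t) K) (h' : IsAvoidable G C t K')
    (ht : t.Injective) (htC : ∀ i, t i ∉ C) (hθ : IsEmpty (RootedTheta G C t)) : K' ⊆ K := by
  by_contra hK
  obtain ⟨y, hy, hyK⟩ := Set.not_subset.1 hK
  obtain ⟨p, x, hp, ⟨hx, hxK⟩, hpx⟩ :=
    (reachableIn_of_connected h'.connected h'.root_mem hy).exists_exit h.1.root_mem hyK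
  rw [Set.inter_comm] at hp
  have hxC : x ∈ C := (h'.subset hx).resolve_left fun e => hxK (e ▸ h.1.root_mem)
  exact not_isEmpty_iff.2 (h.1.nonempty_rootedTheta h' ht htC hx hxK ⟨p, hp, x, rfl, hpx⟩
    (not_linked_of_maximal h hxC hxK ⟨p, hp.right_mem.1, x, rfl, hpx⟩)) hθ

end IsAvoidable

theorem isAvoidable_root (hC : (G.induce C).Connected) (htC : ∀ i, t i ∉ C)
    (hadj : ∀ i, Touch G {t i} C) : IsAvoidable G C t {t 2} where
  root_mem := rfl
  subset := by simp
  connected := connected_singleton _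
  linked := by
    rw [Set.sdiff_singleton_eq_self (htC 2)]
    obtain ⟨_, rfl, u, hu, hau⟩ := hadj 0
    obtain ⟨_, rfl, v, hv, hbv⟩ := hadj 1
    exact linked_of_reachableIn rfl hau rfl hbv (reachableIn_of_connected hC hu hv)

-- Without such a theta graph there is a greatest avoidable set. It is invariant, and a vertex of
-- `C` next to it separates the first two terminals in the rest of `C`, hence is fixed.
theorem nonempty_rootedTheta_of_finite (hfin : C.Finite) (hC : (G.induce C).Connected) (α : G ≃g G)
    (hα : α '' C = C) (hmoved : ∀ x ∈ C, α x ≠ x) (ht : t.Injective) (htC : ∀ i, t i ∉ C)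
    (htα : ∀ i, α (t i) = t i) (hadj : ∀ i, Touch G {t i} C) : Nonempty (RootedTheta G C t) := by
  by_contra hθ
  rw [not_nonempty_iff] at hθ
  have hfinite {K} (hK : IsAvoidable G C t K) : K.Finite := (hfin.insert (t 2)).subset hK.subset
  obtain ⟨K, hK⟩ : ∃ K, Maximal (IsAvoidable G C t) K :=
    ((hfin.insert (t 2)).finite_subsets.subset fun K hK => hK.subset).exists_maximal
      ⟨{t 2}, isAvoidable_root hC htC hadj⟩
  have hαK : α '' K = K := Set.eq_of_subset_of_ncard_le
    (IsAvoidable.subset_of_maximal hK (hK.1.image α hα htα) ht htC hθ)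
    (Set.ncard_image_of_injective K α.injective).ge (hfinite hK.1)
  obtain ⟨w, hw, -⟩ := hK.1.linked
  obtain ⟨p, x, hp, ⟨hxC, hxK⟩, hpx⟩ := (reachableIn_of_connected
    (connected_union_of_touch (connected_singleton (t 2)) hC (hadj 2)) (Or.inl rfl)
    (Or.inr (attachment_subset hw).1)).exists_exit hK.1.root_mem (attachment_subset hw).2
  replace hxC : x ∈ C := hxC.resolve_left fun e => hxK (e ▸ hK.1.root_mem)
  refine hmoved x hxC (hK.1.linked.fixes_cut_vertex α ?_ ?_ ?_ (hfin.subset Set.sdiff_subset)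
    ⟨hxC, hxK⟩ (IsAvoidable.not_linked_of_maximal hK hxC hxK ⟨p, hp.right_mem.2, x, rfl, hpx⟩))
  · rw [Set.image_singleton, htα]
  · rw [Set.image_singleton, htα]
  · rw [Set.image_sdiff α.injective, hα, hαK]

end FixedPointFree

section MovedComponent

variable {V : Type*} {G : SimpleGraph V} {α : G ≃g G} {t : Fin 3 → V} {s v w x y : V}

/-- The component of `y` in the subgraph induced by the vertices that `α` moves. -/
def movedComponent (α : G ≃g G) (y : V) : Set V := componentIn G {x | α x ≠ x} y

theorem ne_of_mem_movedComponent (h : x ∈ movedComponent α y) : α x ≠ x := h.right_mem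

theorem mem_movedComponent_self (hy : α y ≠ y) : y ∈ movedComponent α y := .refl hy

theorem connected_movedComponent (hy : α y ≠ y) : (G.induce (movedComponent α y)).Connected :=
  connected_componentIn hy

theorem image_mem_movedComponent (h : x ∈ movedComponent α y) :
    α x ∈ movedComponent α (α y) := by
  refine (ReachableIn.map α h).mono ?_
  rintro _ ⟨z, hz, rfl⟩ h
  exact hz (α.injective h)

theorem fixed_of_mem_outerBoundary (h : x ∈ outerBoundary G (movedComponent α y)) : α x = x := by
  obtain ⟨hx, u, hu, hux⟩ := h
  by_contra hαx
  exact hx (hu.trans (.of_adj (ne_of_mem_movedComponent hu) hαx hux))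

theorem exists_finite_mapsTo [G.LocallyFinite] (hs : α s = s) (h : G.Reachable v s) :
    ∃ B : Set V, B.Finite ∧ Set.MapsTo α B B ∧ v ∈ B := by
  obtain ⟨p⟩ := h
  induction p with
  | nil => exact ⟨{_}, Set.finite_singleton _, by simp [Set.MapsTo, hs], rfl⟩
  | @cons v w _ hvw _ ih =>
    obtain ⟨B, hfin, hB, hw⟩ := ih hs
    refine ⟨⋃ x ∈ B, G.neighborSet x, hfin.biUnion fun x _ => Set.toFinite _, ?_,
      Set.mem_biUnion hw hvw.symm⟩
    intro z hz
    obtain ⟨x, hx, hxz⟩ := Set.mem_iUnion₂.1 hz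
    exact Set.mem_biUnion (hB hx) (α.map_adj_iff.2 hxz)

theorem ReachableIn.exists_finite_mapsTo [G.LocallyFinite] {S : Set V} (hG : G.Preconnected)
    (hs : α s = s) (h : ReachableIn G S v w) :
    ∃ B : Set V, B.Finite ∧ Set.MapsTo α B B ∧ ReachableIn G (S ∩ B) v w := by
  refine h.mem_of_closed (T := {w | ∃ B : Set V, B.Finite ∧ Set.MapsTo α B B ∧
    ReachableIn G (S ∩ B) v w}) ?_ fun x _ z hz hxz hx => ?_
  · obtain ⟨B, hfin, hB, hv⟩ := _root_.exists_finite_mapsTo hs (hG v s)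
    exact ⟨B, hfin, hB, .refl ⟨h.left_mem, hv⟩⟩
  · obtain ⟨B, hfin, hB, hvx⟩ := hx
    obtain ⟨B', hfin', hB', hz'⟩ := _root_.exists_finite_mapsTo hs (hG z s)
    have hvx' := hvx.mono (Set.inter_subset_inter_right S (Set.subset_union_left (t := B')))
    exact ⟨B ∪ B', hfin.union hfin', hB.union_union hB',
      hvx'.trans (.of_adj hvx'.right_mem ⟨hz, Or.inr hz'⟩ hxz)⟩

-- A suitable finite invariant part of the component suffices.
theorem nonempty_rootedTheta_of_mapsTo [G.LocallyFinite] (hG : G.Preconnected)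
    (hαy : α y ∈ movedComponent α y) (ht : t.Injective)
    (hadj : ∀ i, t i ∈ outerBoundary G (movedComponent α y)) :
    Nonempty (RootedTheta G (movedComponent α y) t) := by
  set C := movedComponent α y
  have htα (i) : α (t i) = t i := fixed_of_mem_outerBoundary (hadj i)
  choose u hu hut using fun i => (hadj i).2
  obtain ⟨B₀, hfin₀, hB₀, hy⟩ := hαy.in_component.exists_finite_mapsTo hG (htα 0)
  choose B hfin hB hyu using fun i =>
    (hu i).in_component.exists_finite_mapsTo hG (htα 0)
  set D := B₀ ∪ ⋃ i, B i
  have hD : Set.MapsTo α D D := hB₀.union_union (Set.mapsTo_iUnion_iUnion hB)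
  have hDfin : D.Finite := hfin₀.union (Set.finite_iUnion hfin)
  set C' := componentIn G (C ∩ D) y
  have hC'C : C' ⊆ C := componentIn_subset.trans Set.inter_subset_left
  have hfin' : C'.Finite := hDfin.subset (componentIn_subset.trans Set.inter_subset_right)
  have hyα : ReachableIn G (C ∩ D) y (α y) :=
    hy.mono (Set.inter_subset_inter_right _ Set.subset_union_left)
  have hα : α '' C' = C' := by
    refine Set.eq_of_subset_of_ncard_le ?_ (Set.ncard_image_of_injective _ α.injective).ge hfin'
    rintro _ ⟨x, hx, rfl⟩
    refine hyα.trans ((ReachableIn.map α hx).mono ?_)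
    rintro _ ⟨z, hz, rfl⟩
    exact ⟨hαy.trans (image_mem_movedComponent hz.1), hD hz.2⟩
  obtain ⟨θ⟩ := nonempty_rootedTheta_of_finite hfin' (connected_componentIn hyα.left_mem) α hα
    (fun x hx => ne_of_mem_movedComponent (hC'C hx)) ht
    (fun i hi => ne_of_mem_movedComponent (hC'C hi) (htα i)) htα fun i => ⟨t i, rfl, u i,
      (hyu i).mono (Set.inter_subset_inter_right _ ((Set.subset_iUnion B i).trans
        Set.subset_union_right)), (hut i).symm⟩
  exact ⟨θ.mono hC'C⟩

theorem nonempty_rootedTheta_of_disjoint (hαy : α y ∉ movedComponent α y) (hy : α y ≠ y)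
    (ht : t.Injective) (hadj : ∀ i, t i ∈ outerBoundary G (movedComponent α y)) :
    Nonempty (RootedTheta G (movedComponent α y ∪ α '' movedComponent α y) t) := by
  set C := movedComponent α y
  have htα (i) : α (t i) = t i := fixed_of_mem_outerBoundary (hadj i)
  have hC := connected_movedComponent hy
  have hdisj : Disjoint C (α '' C) := by
    rw [Set.disjoint_left]
    rintro _ hw ⟨w, hw', rfl⟩
    exact hαy (hw.trans (image_mem_movedComponent hw').symm)
  have htouch (i) : Touch G {t i} C := by
    obtain ⟨-, u, hu, hut⟩ := hadj i
    exact ⟨t i, rfl, u, hu, hut.symm⟩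
  have htouch' (i) : Touch G {t i} (α '' C) := by
    obtain ⟨_, rfl, u, hu, h⟩ := htouch i
    exact ⟨t i, rfl, α u, ⟨u, hu, rfl⟩, htα i ▸ α.map_adj_iff.2 h⟩
  have hmoved {x} (hx : x ∈ C ∪ α '' C) : α x ≠ x := by
    rcases hx with hx | ⟨x, hx, rfl⟩
    · exact ne_of_mem_movedComponent hx
    · exact ne_of_mem_movedComponent (image_mem_movedComponent hx)
  exact ⟨{
    toMinorModel := .bipartite (fun i => {t i}) ![C, α '' C] (fun i => connected_singleton _)
      (fun | 0 => hC | 1 => connected_image α hC)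
      (fun i j hij => Set.disjoint_singleton.2 (ht.ne hij)) (forall_ne_disjoint_two hdisj)
      (fun
        | i, 0 => Set.disjoint_singleton_left.2 fun h => hmoved (Or.inl h) (htα i)
        | i, 1 => Set.disjoint_singleton_left.2 fun h => hmoved (Or.inr h) (htα i))
      (fun | i, 0 => htouch i | i, 1 => htouch' i)
    root_mem := fun _ => rfl
    spoke_subset := fun _ => Set.singleton_subset_iff.2 (Set.mem_insert _ _)
    hub_subset := fun | 0 => Set.subset_union_left | 1 => Set.subset_union_right }⟩

theorem nonempty_rootedTheta_of_movedComponent [G.LocallyFinite] (hG : G.Preconnected)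
    (hy : α y ≠ y) (ht : t.Injective)
    (hadj : ∀ i, t i ∈ outerBoundary G (movedComponent α y)) :
    Nonempty (RootedTheta G (movedComponent α y ∪ α '' movedComponent α y) t) := by
  by_cases hαy : α y ∈ movedComponent α y
  · obtain ⟨θ⟩ := nonempty_rootedTheta_of_mapsTo hG hαy ht hadj
    exact ⟨θ.mono Set.subset_union_left⟩
  · exact nonempty_rootedTheta_of_disjoint hαy hy ht hadj

end MovedComponent

section FaceCycle

variable {V : Type*} {G : SimpleGraph V} {U X Y A H : Set V} {t : Fin 3 → V} {a w : V}

theorem touch_componentIn_of_mem_attachment {S : Set V} (hw : w ∈ attachment G X S) :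
    Touch G (componentIn G S w) X := by
  obtain ⟨p, hp, u, hu, h⟩ := hw
  exact ⟨u, h.symm, p, hp, hu.symm⟩

theorem touch_union_attachment_sdiff_singleton (hA : (G.induce A).Connected) (ha : a ∈ A)
    (h : Touch G A X) : Touch G (X ∪ attachment G X (A \ {a})) {a} := by
  obtain ⟨p, hp, q, hq, hpq⟩ := h
  by_cases hpa : p = a
  · exact ⟨q, Or.inl hq, p, hpa, hpq.symm⟩
  · have hpA : p ∈ A \ {a} := ⟨hp, hpa⟩
    exact (touch_componentIn_sdiff hA hpA ha rfl).mono ((componentIn_subset_attachment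
      (mem_attachment_of_adj (Or.inl hq) hpq.symm hpA)).trans Set.subset_union_right) subset_rfl

theorem exists_connected_touch (hH : (G.induce H).Connected) (hX : X.Nonempty) (hXH : X ⊆ H)
    (hY : (G.induce Y).Connected) (hYH : Y ⊆ H) (hXY : Disjoint X Y) :
    ∃ Z ⊆ H \ X, Y ⊆ Z ∧ (G.induce Z).Connected ∧ Touch G Z X := by
  obtain ⟨x, hx⟩ := hX
  obtain ⟨y, hy⟩ := Set.nonempty_coe_sort.1 hY.nonempty
  have hYX : Y ⊆ H \ X := fun z hz => ⟨hYH hz, Set.disjoint_right.1 hXY hz⟩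
  exact ⟨componentIn G (H \ X) y, componentIn_subset,
    fun z hz => (reachableIn_of_connected hY hy hz).mono hYX,
    connected_componentIn (hYX hy), touch_componentIn_sdiff hH (hYX hy) (hXH hx) hx⟩

/-- Adding to a model of a complete graph a branch set that touches all the others. -/
def MinorModel.cone {n : ℕ} (M : MinorModel (completeGraph (Fin n)) G) (F : Set V)
    (hF : (G.induce F).Connected) (hdisj : ∀ i, Disjoint F (M.branch i))
    (htouch : ∀ i, Touch G F (M.branch i)) : MinorModel (completeGraph (Fin (n + 1))) G where
  branch := Fin.cons F M.branch
  connected := Fin.cases hF M.connected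
  disjoint {i j} := by
    refine Fin.cases (Fin.cases (by simp) fun l _ => hdisj l) (fun k => Fin.cases
      (fun _ => (hdisj k).symm) fun l h => M.disjoint (by simpa using h)) i j
  touch {i j} := by
    refine Fin.cases (Fin.cases (by simp) fun l _ => htouch l) (fun k => Fin.cases
      (fun _ => (htouch k).symm) fun l h => M.touch (by simpa using h)) i j

/-- Replacing one branch set of a minor model by a connected subset that still touches the
branch sets it should. -/
def MinorModel.shrink {ι : Type*} [DecidableEq ι] {J : SimpleGraph ι} (M : MinorModel J G) (i : ι)
    (K : Set V) (hK : K ⊆ M.branch i) (hconn : (G.induce K).Connected)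
    (htouch : ∀ j, J.Adj i j → Touch G K (M.branch j)) : MinorModel J G where
  branch := Function.update M.branch i K
  connected j := by
    obtain rfl | hj := eq_or_ne j i
    · rwa [Function.update_self]
    · rw [Function.update_of_ne hj]
      exact M.connected j
  disjoint {j l} h := by
    have hsub (j) : Function.update M.branch i K j ⊆ M.branch j := by
      obtain rfl | hj := eq_or_ne j i <;> simp [*]
    exact (M.disjoint h).mono (hsub j) (hsub l)
  touch {j l} h := by
    obtain rfl | hj := eq_or_ne j i
    · simpa [h.ne'] using htouch l h
    obtain rfl | hl := eq_or_ne l i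
    · simpa [h.ne] using (htouch j h.symm).symm
    · simpa [hj, hl] using M.touch h

namespace RootedTheta

/-- The theta graph whose spokes are enlarged by the branch sets of a triangle model through the
terminals. -/
def thicken (θ : RootedTheta G U t) (F : MinorModel (completeGraph (Fin 3)) G)
    (htF : ∀ i, t i ∈ F.branch i) (hUF : ∀ i, Disjoint U (F.branch i)) :
    MinorModel (completeBipartiteGraph (Fin 3) (Fin 2)) G :=
  have spoke_disjoint {j l} (h : j ≠ l) : Disjoint (θ.spoke j) (F.branch l) :=
    (Set.disjoint_insert_left.2 ⟨Set.disjoint_left.1 (F.disjoint h) (htF j), hUF l⟩).mono_left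
      (θ.spoke_subset j)
  .bipartite (fun j => θ.spoke j ∪ F.branch j) θ.hub
    (fun j => connected_union_of_mem (θ.connected _) (F.connected j) (θ.root_mem j) (htF j))
    (fun k => θ.connected _)
    (fun j l h => ((θ.disjoint (by simpa using h)).union_right (spoke_disjoint h)).union_left
      ((spoke_disjoint h.symm).symm.union_right (F.disjoint h)))
    (fun k l h => θ.disjoint (by simpa using h))
    (fun j k => (θ.disjoint (by simp)).union_left ((hUF j).symm.mono_right (θ.hub_subset k)))
    (fun j k => (θ.touch (by simp)).mono Set.subset_union_left subset_rfl)

-- Otherwise a component of the spoke without its terminal is attached to both hubs, and, like the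
-- other two thickened spokes, to the branch set of the triangle at that terminal.
theorem not_linked_spoke (θ : RootedTheta G U t) (emb : PlanarEmbedding G)
    (F : MinorModel (completeGraph (Fin 3)) G) (htF : ∀ i, t i ∈ F.branch i)
    (hUF : ∀ i, Disjoint U (F.branch i)) (i : Fin 3) :
    ¬ Linked G (θ.hub 0) (θ.hub 1) (θ.spoke i \ {t i}) := by
  rintro ⟨w, hw₀, hw₁⟩
  have hw : w ∈ θ.spoke i \ {t i} := attachment_subset hw₀
  set K := componentIn G (θ.spoke i \ {t i}) w
  have hK : K ⊆ θ.spoke i \ {t i} := componentIn_subset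
  let M := (θ.thicken F htF hUF).shrink (.inl i) K
    (hK.trans (Set.sdiff_subset.trans Set.subset_union_left)) (connected_componentIn hw) (fun
      | .inr 0, _ => touch_componentIn_of_mem_attachment hw₀
      | .inr 1, _ => touch_componentIn_of_mem_attachment hw₁
      | .inl _, h => by simp at h)
  have hMi : M.branch (.inl i) = K := Function.update_self ..
  have hM {x : Fin 3 ⊕ Fin 2} (hx : x ≠ .inl i) : M.branch x = (θ.thicken F htF hUF).branch x :=
    Function.update_of_ne hx ..
  refine emb.not_third_hub M (F.connected i) (fun x => ?_) fun j => ?_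
  · obtain rfl | hx := eq_or_ne x (.inl i)
    · exact hMi ▸ (hUF i).mono_left fun y hy =>
        (θ.spoke_subset i (hK hy).1).resolve_left (hK hy).2
    · exact hM hx ▸ ((θ.thicken F htF hUF).disjoint hx).mono_right Set.subset_union_right
  · obtain rfl | hj := eq_or_ne j i
    · exact hMi ▸ (touch_componentIn_sdiff (θ.connected _) hw (θ.root_mem j) rfl).mono
        subset_rfl (Set.singleton_subset_iff.2 (htF j))
    · rw [hM (by simpa using hj)]
      exact (F.touch hj).mono Set.subset_union_right subset_rfl

/-- A hub together with the parts of the spokes that are attached to it when the terminals are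
removed. -/
def extendedHub (θ : RootedTheta G U t) (k : Fin 2) : Set V :=
  ⋃ i, (θ.hub k ∪ attachment G (θ.hub k) (θ.spoke i \ {t i}))

theorem spoke_sdiff_subset (θ : RootedTheta G U t) (i : Fin 3) : θ.spoke i \ {t i} ⊆ U :=
  fun _ hx => (θ.spoke_subset i hx.1).resolve_left hx.2

theorem extendedHub_subset (θ : RootedTheta G U t) (k : Fin 2) : θ.extendedHub k ⊆ U :=
  Set.iUnion_subset fun i => Set.union_subset (θ.hub_subset k)
    (attachment_subset.trans (θ.spoke_sdiff_subset i))

theorem connected_extendedHub (θ : RootedTheta G U t) (k : Fin 2) :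
    (G.induce (θ.extendedHub k)).Connected := by
  obtain ⟨c, hc⟩ := Set.nonempty_coe_sort.1 (θ.connected (.inr k)).nonempty
  refine connected_of_forall_reachableIn (Set.mem_iUnion.2 ⟨0, Or.inl hc⟩) fun v hv => ?_
  obtain ⟨i, hi⟩ := Set.mem_iUnion.1 hv
  exact (reachableIn_of_connected (connected_union_attachment (θ.connected _)) (Or.inl hc) hi).mono
    (Set.subset_iUnion _ i)

theorem touch_extendedHub (θ : RootedTheta G U t) (k : Fin 2) (i : Fin 3) :
    Touch G (θ.extendedHub k) {t i} :=
  (touch_union_attachment_sdiff_singleton (θ.connected (.inl i)) (θ.root_mem i)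
    (θ.touch (by simp))).mono (Set.subset_iUnion_of_subset i subset_rfl) subset_rfl

theorem disjoint_extendedHub (θ : RootedTheta G U t)
    (h : ∀ i, ¬ Linked G (θ.hub 0) (θ.hub 1) (θ.spoke i \ {t i})) :
    Disjoint (θ.extendedHub 0) (θ.extendedHub 1) := by
  have hub_spoke (k i) : Disjoint (θ.hub k) (θ.spoke i \ {t i}) :=
    (θ.disjoint (by simp)).mono_right Set.sdiff_subset
  refine Set.disjoint_iUnion_left.2 fun i => Set.disjoint_iUnion_right.2 fun j => ?_
  obtain rfl | hij := eq_or_ne i j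
  · exact disjoint_union_attachment (θ.disjoint (by simp)) (hub_spoke 0 i) (hub_spoke 1 i) (h i)
  · refine ((θ.disjoint (by simp)).union_right ((hub_spoke 0 j).mono_right
      attachment_subset)).union_left (((hub_spoke 1 i).symm.mono_left
      attachment_subset).union_right ?_)
    exact Disjoint.mono (attachment_subset.trans Set.sdiff_subset)
      (attachment_subset.trans Set.sdiff_subset) (θ.disjoint (by simpa using hij))

-- The three branch sets, the first extended hub, and the rest of `H` around the second one form
-- a model of `K₅`.
theorem false_of_triangle (θ : RootedTheta G U t) (emb : PlanarEmbedding G)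
    (F : MinorModel (completeGraph (Fin 3)) G) (htF : ∀ i, t i ∈ F.branch i)
    (hH : (G.induce H).Connected) (hUH : U ⊆ H) (hHF : ∀ i, Disjoint H (F.branch i)) : False := by
  have hsub (k) : θ.extendedHub k ⊆ H := (θ.extendedHub_subset k).trans hUH
  have htouch (k i) : Touch G (θ.extendedHub k) (F.branch i) :=
    (θ.touch_extendedHub k i).mono subset_rfl (Set.singleton_subset_iff.2 (htF i))
  obtain ⟨Z, hZ, hZ₁, hZconn, hZ₀⟩ := exists_connected_touch hH
    (Set.nonempty_coe_sort.1 (θ.connected_extendedHub 0).nonempty) (hsub 0)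
    (θ.connected_extendedHub 1) (hsub 1)
    (θ.disjoint_extendedHub (θ.not_linked_spoke emb F htF fun i => (hHF i).mono_left hUH))
  let M := F.cone _ (θ.connected_extendedHub 0) (fun i => (hHF i).mono_left (hsub 0)) (htouch 0)
  exact emb.isEmpty_minorModel_five.false (M.cone Z hZconn
    (Fin.cases (Set.disjoint_sdiff_left.mono_left hZ) fun i =>
      (hHF i).mono_left (hZ.trans Set.sdiff_subset))
    (Fin.cases hZ₀ fun i => (htouch 1 i).mono hZ₁ subset_rfl))

end RootedTheta

end FaceCycle

section Rigidity

variable {V : Type*} {G : SimpleGraph V} {α : G ≃g G} {S R : Set V} {v x y : V}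

theorem outerBoundary_componentIn_subset (S : Set V) (x : V) :
    outerBoundary G (componentIn G S x) ⊆ Sᶜ := fun _ ⟨hz, _, hu, huz⟩ hzS =>
  hz (hu.trans (.of_adj hu.right_mem hzS huz))

theorem outerBoundary_union_image_movedComponent_subset :
    outerBoundary G (movedComponent α y ∪ α '' movedComponent α y) ⊆
      outerBoundary G (movedComponent α y) := by
  rintro x ⟨hx, u, hu | ⟨u, hu, rfl⟩, hux⟩
  · exact ⟨fun h => hx (Or.inl h), u, hu, hux⟩
  · obtain ⟨x, rfl⟩ := α.surjective x
    have hx' : x ∈ outerBoundary G (movedComponent α y) :=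
      ⟨fun h => hx (Or.inr ⟨x, h, rfl⟩), u, hu, α.map_adj_iff.1 hux⟩
    rwa [fixed_of_mem_outerBoundary hx']

theorem exists_injective_of_three_le_encard (h : 3 ≤ S.encard) :
    ∃ t : Fin 3 → V, t.Injective ∧ ∀ i, t i ∈ S := by
  obtain ⟨T, hTS, hT⟩ := Set.exists_subset_encard_eq h
  obtain ⟨a, b, c, hab, hac, hbc, rfl⟩ := Set.encard_eq_three.1 hT
  refine ⟨![a, b, c], fun i j => ?_, fun i => hTS ?_⟩
  · fin_cases i <;> fin_cases j <;> simp [hab, hac, hbc, hab.symm, hac.symm, hbc.symm]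
  · fin_cases i <;> simp

theorem ThreeConnected.preconnected (hG : ThreeConnected G) : G.Preconnected := fun u v => by
  have := hG.2 ∅ Set.finite_empty (by simp)
  rw [Set.compl_empty] at this
  exact (reachableIn_of_connected this (Set.mem_univ u) (Set.mem_univ v)).2.2.map
    (Embedding.induce Set.univ).toHom

theorem ThreeConnected.exists_outerBoundary (hG : ThreeConnected G) (hx : x ∈ R)
    (hy : y ∉ R ∪ outerBoundary G R) :
    ∃ t : Fin 3 → V, t.Injective ∧ ∀ i, t i ∈ outerBoundary G R := by
  refine exists_injective_of_three_le_encard (not_lt.1 fun hlt => ?_)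
  have hle : (outerBoundary G R).encard ≤ 2 := Order.le_of_lt_add_one hlt
  have hfin : (outerBoundary G R).Finite := Set.finite_of_encard_le_coe hle
  have hcard : (outerBoundary G R).ncard ≤ 2 := by
    rw [← hfin.cast_ncard_eq] at hle
    exact_mod_cast hle
  refine hy (Or.inl ((reachableIn_of_connected (hG.2 _ hfin hcard) (fun h => h.1 hx)
    fun h => hy (Or.inr h)).mem_of_closed hx fun u _ v hv huv hu => ?_))
  by_contra hvR
  exact hv ⟨hvR, u, hu, huv⟩

-- Otherwise a component of the remaining graph, whose boundary lies in that of the moved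
-- component, is a third hub for a theta graph rooted at three of its boundary vertices.
theorem mem_outerBoundary_movedComponent_of_fixed [G.LocallyFinite] (emb : PlanarEmbedding G)
    (hG : ThreeConnected G) (hy : α y ≠ y) (hx : α x = x) :
    x ∈ outerBoundary G (movedComponent α y) := by
  set C := movedComponent α y
  set U := C ∪ α '' C
  set R := componentIn G (U ∪ outerBoundary G C)ᶜ x
  by_contra hxC
  have hxU : x ∉ U := by
    rintro (h | ⟨z, hz, rfl⟩)
    · exact ne_of_mem_movedComponent h hx
    · exact ne_of_mem_movedComponent hz (α.injective hx)
  have hxR : x ∈ R := .refl fun h => h.elim hxU hxC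
  have hR : R ⊆ (U ∪ outerBoundary G C)ᶜ := componentIn_subset
  have hdisj : Disjoint U R := Set.disjoint_right.2 fun z hz hzU => hR hz (Or.inl hzU)
  have hboundary : outerBoundary G R ⊆ outerBoundary G C := fun z hz => by
    rcases not_not.1 (outerBoundary_componentIn_subset _ _ hz) with hzU | hzC
    · obtain ⟨-, u, hu, huz⟩ := hz
      exact (hR hu (Or.inr (outerBoundary_union_image_movedComponent_subset
        ⟨Set.disjoint_right.1 hdisj hu, z, hzU, huz.symm⟩))).elim
    · exact hzC
  obtain ⟨t, ht, htR⟩ := hG.exists_outerBoundary (y := y) hxR fun h => h.elim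
    (fun h => hR h (Or.inl (Or.inl (mem_movedComponent_self hy))))
    fun h => hy (fixed_of_mem_outerBoundary (hboundary h))
  obtain ⟨θ⟩ := nonempty_rootedTheta_of_movedComponent hG.preconnected hy ht
    fun i => hboundary (htR i)
  refine emb.not_third_hub θ.toMinorModel (connected_componentIn hxR.left_mem) ?_ fun i => ?_
  · rintro (i | k)
    · exact (Set.disjoint_insert_left.2 ⟨(htR i).1, hdisj⟩).mono_left (θ.spoke_subset i)
    · exact hdisj.mono_left (θ.hub_subset k)
  · obtain ⟨-, u, hu, hut⟩ := htR i
    exact ⟨t i, θ.root_mem i, u, hu, hut.symm⟩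

theorem apply_eq_self_of_fixes_triangle [G.LocallyFinite] (emb : PlanarEmbedding G)
    (hG : ThreeConnected G) (F : MinorModel (completeGraph (Fin 3)) G)
    (hfix : ∀ i, ∀ x ∈ F.branch i, α x = x)
    (hH : (G.induce (⋃ i, F.branch i)ᶜ).Connected) (y : V) : α y = y := by
  by_contra hy
  choose t htF using fun i => Set.nonempty_coe_sort.1 (F.connected i).nonempty
  have ht : t.Injective := fun i j hij => by
    by_contra hne
    exact Set.disjoint_left.1 (F.disjoint hne) (htF i) (hij ▸ htF j)
  obtain ⟨θ⟩ := nonempty_rootedTheta_of_movedComponent hG.preconnected hy ht fun i =>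
    mem_outerBoundary_movedComponent_of_fixed emb hG hy (hfix i _ (htF i))
  refine θ.false_of_triangle emb F htF hH ?_ fun i =>
    Set.disjoint_compl_left_iff_subset.2 (Set.subset_iUnion _ i)
  rintro x hx hxF
  obtain ⟨i, hi⟩ := Set.mem_iUnion.1 hxF
  rcases hx with hx | ⟨x, hx, rfl⟩
  · exact ne_of_mem_movedComponent hx (hfix i _ hi)
  · exact ne_of_mem_movedComponent hx (α.injective (hfix i _ hi))

theorem connected_image_getVert {u v : V} (w : G.Walk u v) {m n : ℕ} (hmn : m ≤ n)
    (hn : n ≤ w.length) : (G.induce (w.getVert '' Set.Icc m n)).Connected := by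
  refine connected_of_forall_reachableIn ⟨m, ⟨le_rfl, hmn⟩, rfl⟩ ?_
  rintro _ ⟨k, ⟨hmk, hkn⟩, rfl⟩
  induction k, hmk using Nat.le_induction with
  | base => exact .refl ⟨m, ⟨le_rfl, hmn⟩, rfl⟩
  | succ k hmk ih =>
    have h := ih (by omega)
    exact h.trans (.of_adj h.right_mem ⟨k + 1, ⟨by omega, hkn⟩, rfl⟩
      (w.adj_getVert_succ (by omega)))

/-- The model of a triangle with the given branch sets. -/
def MinorModel.triangle {A B C : Set V} (hA : (G.induce A).Connected) (hB : (G.induce B).Connected)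
    (hC : (G.induce C).Connected) (hAB : Disjoint A B) (hAC : Disjoint A C) (hBC : Disjoint B C)
    (tAB : Touch G A B) (tAC : Touch G A C) (tBC : Touch G B C) :
    MinorModel (completeGraph (Fin 3)) G where
  branch := ![A, B, C]
  connected := fun | 0 => hA | 1 => hB | 2 => hC
  disjoint := forall_ne_disjoint_three hAB hAC hBC _ _
  touch {i j} h := match i, j with
    | 0, 1 => tAB
    | 0, 2 => tAC
    | 1, 2 => tBC
    | 1, 0 => tAB.symm
    | 2, 0 => tAC.symm
    | 2, 1 => tBC.symm
    | 0, 0 | 1, 1 | 2, 2 => absurd rfl h.ne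

theorem setOf_mem_support_eq_image_getVert (w : G.Walk v v) (hw : 0 < w.length) :
    {x | x ∈ w.support} = w.getVert '' Set.Iio w.length := by
  ext x
  constructor
  · intro hx
    obtain ⟨i, rfl, hi⟩ := Walk.mem_support_iff_exists_getVert.1 hx
    rcases hi.lt_or_eq with hi | rfl
    · exact ⟨i, hi, rfl⟩
    · exact ⟨0, hw, by simp⟩
  · rintro ⟨i, -, rfl⟩
    exact w.getVert_mem_support i

theorem exists_triangle_of_isCycle {w : G.Walk v v} (hw : w.IsCycle) :
    ∃ F : MinorModel (completeGraph (Fin 3)) G, ⋃ i, F.branch i = {x | x ∈ w.support} := by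
  have h3 := hw.three_le_length
  have disjoint {m n k l : ℕ} (hnk : n < k) (hl : l < w.length) :
      Disjoint (w.getVert '' Set.Icc m n) (w.getVert '' Set.Icc k l) := by
    rw [Set.disjoint_left]
    rintro _ ⟨i, hi, rfl⟩ ⟨j, hj, hij⟩
    obtain ⟨⟨-, hin⟩, hkj, hjl⟩ := hi, hj
    have := hw.getVert_injOn' (by simp; omega) (by simp; omega) hij
    omega
  have touch {m n l : ℕ} (hmn : m ≤ n) (hnl : n < l) (hl : l ≤ w.length) :
      Touch G (w.getVert '' Set.Icc m n) (w.getVert '' Set.Icc (n + 1) l) :=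
    ⟨_, ⟨n, ⟨hmn, le_rfl⟩, rfl⟩, _, ⟨n + 1, ⟨le_rfl, hnl⟩, rfl⟩, w.adj_getVert_succ (by omega)⟩
  have last : G.Adj v (w.getVert (w.length - 1)) := by
    have := w.adj_getVert_succ (i := w.length - 1) (by omega)
    rwa [Nat.sub_add_cancel (by omega), Walk.getVert_length, G.adj_comm] at this
  refine ⟨.triangle (connected_image_getVert w (le_refl 0) (by omega))
    (connected_image_getVert w (le_refl 1) (by omega))
    (connected_image_getVert w (m := 2) (n := w.length - 1) (by omega) (by omega))
    (disjoint one_pos (by omega)) (disjoint two_pos (by omega)) (disjoint one_lt_two (by omega))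
    (touch le_rfl one_pos (by omega))
    ⟨v, ⟨0, by simp⟩, _, ⟨w.length - 1, ⟨by omega, le_rfl⟩, rfl⟩, last⟩
    (touch le_rfl (by omega) (by omega)), ?_⟩
  rw [setOf_mem_support_eq_image_getVert w (by omega)]
  change ⋃ i, ![_, _, _] i = _
  rw [← show Set.Icc 0 0 ∪ (Set.Icc 1 1 ∪ Set.Icc 2 (w.length - 1)) = Set.Iio w.length by
    ext i; simp; omega, Set.image_union, Set.image_union]
  ext x
  simpa [Fin.exists_fin_succ] using or_left_comm

theorem IsPeripheral.apply_eq_self [G.LocallyFinite] (emb : PlanarEmbedding G)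
    (hG : ThreeConnected G) {w : G.Walk v v} (hw : IsPeripheral G w)
    (hfix : ∀ x ∈ w.support, α x = x) (y : V) : α y = y := by
  obtain ⟨F, hF⟩ := exists_triangle_of_isCycle hw.1
  rcases hw.2.2 with hempty | hconn
  · exact hfix y (not_not.1 (Set.eq_empty_iff_forall_notMem.1 hempty y))
  · exact apply_eq_self_of_fixes_triangle emb hG F
      (fun i x hx => hfix x (hF.subset (Set.mem_iUnion.2 ⟨i, hx⟩))) (hF ▸ hconn) y

end Rigidity

section Boundary

variable {V : Type*} {G : SimpleGraph V} [G.LocallyFinite] {X Y : Finset V} {x y : V}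

theorem finite_outerBoundary {S : Set V} (hS : S.Finite) : (outerBoundary G S).Finite :=
  (hS.biUnion fun _ _ => Set.toFinite (G.neighborSet _)).subset fun _ ⟨_, _, hu, huv⟩ =>
    Set.mem_biUnion hu huv

/-- The outer boundary of a finite set of vertices of a locally finite graph, as a finite set. -/
noncomputable def boundary (G : SimpleGraph V) [G.LocallyFinite] (X : Finset V) : Finset V :=
  (finite_outerBoundary (G := G) X.finite_toSet).toFinset

theorem mem_boundary : y ∈ boundary G X ↔ y ∉ X ∧ ∃ x ∈ X, G.Adj x y := by
  simp [boundary, outerBoundary]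

theorem exists_mem_boundary (hG : G.Preconnected) (hX : X.Nonempty) (hy : y ∉ X) :
    ∃ x ∈ X, ∃ t ∈ boundary G X, G.Adj x t := by
  obtain ⟨x, hx⟩ := hX
  obtain ⟨p⟩ := hG x y
  obtain ⟨d, -, hd, hd'⟩ := p.exists_boundary_dart X hx hy
  exact ⟨_, hd, _, mem_boundary.2 ⟨hd', _, hd, d.adj⟩, d.adj⟩

/-- A boundary atom: a nonempty finite set of vertices whose boundary is as small as possible,
and which has the least size among the sets with this property. -/
structure IsBoundaryAtom (G : SimpleGraph V) [G.LocallyFinite] (X : Finset V) : Prop where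
  nonempty : X.Nonempty
  card_boundary_le : ∀ Y : Finset V, Y.Nonempty → (boundary G X).card ≤ (boundary G Y).card
  card_le : ∀ Y : Finset V, Y.Nonempty → (boundary G Y).card ≤ (boundary G X).card →
    X.card ≤ Y.card

theorem exists_isBoundaryAtom [Nonempty V] : ∃ X, IsBoundaryAtom G X := by
  obtain ⟨X, hX, hmin⟩ := exists_minimalFor_of_wellFoundedLT Finset.Nonempty
    (fun X : Finset V => toLex ((boundary G X).card, X.card))
    ⟨_, Finset.singleton_nonempty (Classical.arbitrary V)⟩
  have key (Y : Finset V) (hY : Y.Nonempty) : (boundary G X).card < (boundary G Y).card ∨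
      (boundary G X).card = (boundary G Y).card ∧ X.card ≤ Y.card := by
    have := (le_total _ _).elim id (hmin hY)
    rwa [Prod.Lex.toLex_le_toLex] at this
  exact ⟨X, hX, fun Y hY => by have := key Y hY; omega, fun Y hY h => by have := key Y hY; omega⟩

theorem boundary_image [DecidableEq V] (α : G ≃g G) (X : Finset V) :
    boundary G (X.image α) = (boundary G X).image α := by
  ext y
  obtain ⟨y, rfl⟩ := α.surjective y
  simp [mem_boundary, α.map_adj_iff]

theorem card_boundary_inter_add_card_boundary_union_le [DecidableEq V] (X Y : Finset V) :
    (boundary G (X ∩ Y)).card + (boundary G (X ∪ Y)).card ≤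
      (boundary G X).card + (boundary G Y).card := by
  rw [← Finset.card_union_add_card_inter, ← Finset.card_union_add_card_inter (boundary G X)]
  refine Nat.add_le_add (Finset.card_le_card fun y => ?_) (Finset.card_le_card fun y => ?_)
  all_goals
    simp only [Finset.mem_union, Finset.mem_inter, mem_boundary]
    grind

theorem boundary_sdiff_boundary_subset [DecidableEq V] (h : Disjoint X Y) :
    boundary G (X \ boundary G Y) ⊆ (X ∩ boundary G Y) ∪ (boundary G X \ Y) := fun y hy => by
  obtain ⟨hyX, z, hz, hzy⟩ := mem_boundary.1 hy
  obtain ⟨hzX, hzY⟩ := Finset.mem_sdiff.1 hz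
  by_cases h_mem : y ∈ X
  · simp only [Finset.mem_sdiff, h_mem, true_and, not_not] at hyX
    exact Finset.mem_union_left _ (Finset.mem_inter.2 ⟨h_mem, hyX⟩)
  · refine Finset.mem_union_right _ (Finset.mem_sdiff.2 ⟨mem_boundary.2 ⟨h_mem, z, hzX, hzy⟩,
      fun hyY => hzY (mem_boundary.2 ⟨Finset.disjoint_left.1 h hzX, y, hyY, hzy.symm⟩)⟩)

theorem card_boundary_sdiff_add_card_boundary_sdiff_le [DecidableEq V] (h : Disjoint X Y) :
    (boundary G (X \ boundary G Y)).card + (boundary G (Y \ boundary G X)).card ≤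
      (boundary G X).card + (boundary G Y).card := by
  have hX := (Finset.card_le_card (boundary_sdiff_boundary_subset (G := G) h)).trans
    (Finset.card_union_le _ _)
  have hY := (Finset.card_le_card (boundary_sdiff_boundary_subset (G := G) h.symm)).trans
    (Finset.card_union_le _ _)
  have hX' := Finset.card_inter_add_card_sdiff (boundary G X) Y
  have hY' := Finset.card_inter_add_card_sdiff (boundary G Y) X
  rw [Finset.inter_comm] at hX' hY'
  omega

theorem degree_lt_card_add_card_boundary (hx : x ∈ X) :
    G.degree x < X.card + (boundary G X).card := by
  classical
  have hsub : insert x (G.neighborFinset x) ⊆ X ∪ boundary G X := fun y hy => by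
    rw [Finset.mem_insert, mem_neighborFinset] at hy
    rw [Finset.mem_union, mem_boundary]
    rcases hy with rfl | hy
    · exact .inl hx
    · exact (em (y ∈ X)).imp_right fun h => ⟨h, x, hx, hy⟩
  have hcard := (Finset.card_le_card hsub).trans (Finset.card_union_le _ _)
  rwa [Finset.card_insert_of_notMem (by simp), card_neighborFinset_eq_degree] at hcard

namespace IsBoundaryAtom

theorem image [DecidableEq V] (hX : IsBoundaryAtom G X) (α : G ≃g G) :
    IsBoundaryAtom G (X.image α) := by
  have hb : (boundary G (X.image α)).card = (boundary G X).card := by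
    rw [boundary_image, Finset.card_image_of_injective _ α.injective]
  refine ⟨hX.nonempty.image α, fun Y hY => hb ▸ hX.card_boundary_le Y hY, fun Y hY h => ?_⟩
  rw [Finset.card_image_of_injective _ α.injective]
  exact hX.card_le Y hY (hb ▸ h)

theorem disjoint (hX : IsBoundaryAtom G X) (hY : IsBoundaryAtom G Y) (hne : X ≠ Y) :
    Disjoint X Y := by
  classical
  rw [Finset.disjoint_iff_inter_eq_empty]
  by_contra h
  have hXY := Finset.nonempty_iff_ne_empty.2 h
  have hsub := card_boundary_inter_add_card_boundary_union_le (G := G) X Y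
  have h1 := hY.card_boundary_le _ (hX.nonempty.mono (Finset.subset_union_left (s₂ := Y)))
  have h2 := hY.card_boundary_le _ hX.nonempty
  have h3 := hX.card_boundary_le _ hY.nonempty
  refine hne ((Finset.eq_of_subset_of_card_le Finset.inter_subset_left
    (hX.card_le _ hXY (by omega))).symm.trans
    (Finset.eq_of_subset_of_card_le Finset.inter_subset_right (hY.card_le _ hXY (by omega))))

-- If `X = ∂Y`, then `∂(X ∪ Y) ⊆ ∂X \ Y` is smaller than `∂X`.
theorem not_subset_boundary [DecidableEq V] (hX : IsBoundaryAtom G X)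
    (hY : (boundary G Y).card ≤ X.card) (hXY : (boundary G X ∩ Y).Nonempty) :
    ¬ X ⊆ boundary G Y := fun hsub => by
  have heq := Finset.eq_of_subset_of_card_le hsub hY
  have hsmall : boundary G (X ∪ Y) ⊆ boundary G X \ Y := fun y hy => by
    obtain ⟨hy, z, hz, hzy⟩ := mem_boundary.1 hy
    rw [Finset.notMem_union] at hy
    refine Finset.mem_sdiff.2 ⟨mem_boundary.2 ⟨hy.1, z, ?_, hzy⟩, hy.2⟩
    exact (Finset.mem_union.1 hz).resolve_right fun hzY =>
      hy.1 (heq ▸ mem_boundary.2 ⟨hy.2, z, hzY, hzy⟩)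
  have h1 := hX.card_boundary_le _ (hX.nonempty.mono (Finset.subset_union_left (s₂ := Y)))
  have h2 := Finset.card_le_card hsmall
  have h3 := Finset.card_inter_add_card_sdiff (boundary G X) Y
  have h4 := hXY.card_pos
  omega

theorem card_lt_card_boundary (hX : IsBoundaryAtom G X) (hY : IsBoundaryAtom G Y) (hne : X ≠ Y)
    (hx : x ∈ X) (hy : y ∈ Y) (hxy : G.Adj x y) : X.card < (boundary G X).card := by
  classical
  by_contra! hle
  have hdisj := hX.disjoint hY hne
  have hxY : x ∈ boundary G Y :=
    mem_boundary.2 ⟨Finset.disjoint_left.1 hdisj hx, y, hy, hxy.symm⟩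
  have hyX : y ∈ boundary G X := mem_boundary.2 ⟨Finset.disjoint_right.1 hdisj hy, x, hx, hxy⟩
  have hb : (boundary G X).card = (boundary G Y).card :=
    (hX.card_boundary_le _ hY.nonempty).antisymm (hY.card_boundary_le _ hX.nonempty)
  have hc : X.card = Y.card :=
    (hX.card_le _ hY.nonempty hb.ge).antisymm (hY.card_le _ hX.nonempty hb.le)
  have hltX : (X \ boundary G Y).card < X.card :=
    Finset.card_lt_card (Finset.ssubset_iff_subset_ne.2 ⟨Finset.sdiff_subset, by grind⟩)
  have hltY : (Y \ boundary G X).card < Y.card :=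
    Finset.card_lt_card (Finset.ssubset_iff_subset_ne.2 ⟨Finset.sdiff_subset, by grind⟩)
  have hneX := hX.not_subset_boundary (hb ▸ hle) ⟨y, Finset.mem_inter.2 ⟨hyX, hy⟩⟩
  have hneY := hY.not_subset_boundary (by omega) ⟨x, Finset.mem_inter.2 ⟨hxY, hx⟩⟩
  have h1 := mt (hX.card_le _ (Finset.sdiff_nonempty.2 hneX)) hltX.not_ge
  have h2 := mt (hY.card_le _ (Finset.sdiff_nonempty.2 hneY)) hltY.not_ge
  have := card_boundary_sdiff_add_card_boundary_sdiff_le (G := G) hdisj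
  omega

end IsBoundaryAtom

end Boundary

section OneEnded

variable {V : Type*} {G : SimpleGraph V} {u v : V}

theorem supp_componentComplMk {K : Set V} (hu : u ∉ K) :
    (G.componentComplMk hu).supp = componentIn G Kᶜ u := by
  ext v
  exact ⟨fun ⟨hv, h⟩ => ⟨hu, hv, (ConnectedComponent.exact h).symm⟩,
    fun ⟨_, hv, h⟩ => ⟨hv, ConnectedComponent.sound h.symm⟩⟩

theorem OneEnded.reachableIn (hone : OneEnded G) {K : Set V} (hK : K.Finite)
    (hu : (componentIn G Kᶜ u).Infinite) (hv : (componentIn G Kᶜ v).Infinite) :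
    ReachableIn G Kᶜ u v := by
  lift K to Finset V using hK
  have hu' := hu.nonempty.some_mem.left_mem
  have hv' := hv.nonempty.some_mem.left_mem
  have heq := (hone K).unique ((supp_componentComplMk hu').symm ▸ hu)
    ((supp_componentComplMk hv').symm ▸ hv)
  change v ∈ componentIn G _ u
  rw [← supp_componentComplMk hu', heq, supp_componentComplMk hv']
  exact .refl hv'

theorem OneEnded.infinite (hone : OneEnded G) : Infinite V :=
  let ⟨_, hC, _⟩ := hone ∅
  Set.infinite_univ_iff.1 (hC.mono (Set.subset_univ _))

theorem OneEnded.preconnected (hone : OneEnded G) (htrans : ∀ u v : V, ∃ α : G ≃g G, α u = v) :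
    G.Preconnected := by
  obtain ⟨C, hC, -⟩ := hone ∅
  obtain ⟨c, hc, rfl⟩ := hC.nonempty
  have hinf (u : V) : (componentIn G ∅ᶜ u).Infinite := by
    obtain ⟨α, rfl⟩ := htrans c u
    simp only [Finset.coe_empty, supp_componentComplMk] at hC
    refine (hC.image α.injective.injOn).mono ?_
    rintro _ ⟨x, hx, rfl⟩
    exact (hx.map α).mono (by simp)
  intro u v
  exact (hone.reachableIn Set.finite_empty (hinf u) (hinf v)).2.2.map
    (Embedding.induce ∅ᶜ).toHom

section LocallyFinite

variable [G.LocallyFinite]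

theorem degree_eq_of_transitive (htrans : ∀ u v : V, ∃ α : G ≃g G, α u = v) (u v : V) :
    G.degree u = G.degree v := by
  obtain ⟨α, rfl⟩ := htrans u v
  exact (α.degree_eq u).symm

theorem degree_add_two_le_two_mul_card_boundary [Infinite V]
    (htrans : ∀ u v : V, ∃ α : G ≃g G, α u = v) (hG : G.Preconnected) {X : Finset V}
    (hX : X.Nonempty) (v : V) : G.degree v + 2 ≤ 2 * (boundary G X).card := by
  classical
  obtain ⟨A, hA⟩ := exists_isBoundaryAtom (G := G)
  obtain ⟨z, hz⟩ := Infinite.exists_notMem_finset A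
  obtain ⟨x, hx, t, ht, hxt⟩ := exists_mem_boundary hG hA.nonempty hz
  obtain ⟨α, rfl⟩ := htrans x t
  have hαx : α x ∈ A.image α := Finset.mem_image_of_mem α hx
  have hne : A ≠ A.image α := fun h => (mem_boundary.1 ht).1 (h ▸ hαx)
  have h1 := hA.card_lt_card_boundary (hA.image α) hne hx hαx hxt
  have h2 := degree_lt_card_add_card_boundary (G := G) hx
  have h3 := hA.card_boundary_le X hX
  rw [degree_eq_of_transitive htrans v x]
  omega

theorem three_le_degree_of_isCycle [Infinite V] (htrans : ∀ u v : V, ∃ α : G ≃g G, α u = v)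
    (hG : G.Preconnected) {w : G.Walk v v} (hw : w.IsCycle) (x : V) : 3 ≤ G.degree x := by
  by_contra! hx
  have hdeg (y : V) : (G.neighborSet y).ncard ≤ 2 := by
    rw [← Nat.card_coe_set_eq, Nat.card_eq_fintype_card, card_neighborSet_eq_degree,
      degree_eq_of_transitive htrans y x]
    omega
  obtain ⟨z, hz⟩ := (List.finite_toSet w.support).exists_notMem
  obtain ⟨p⟩ := hG v z
  obtain ⟨d, -, hd, hd'⟩ := p.exists_boundary_dart {x | x ∈ w.support} w.start_mem_support hz
  have heq : w.toSubgraph.neighborSet d.fst = G.neighborSet d.fst :=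
    Set.eq_of_subset_of_ncard_le (Subgraph.neighborSet_subset _ _)
      ((hdeg _).trans (hw.ncard_neighborSet_toSubgraph_eq_two hd).ge) (Set.toFinite _)
  have hadj : d.snd ∈ w.toSubgraph.neighborSet d.fst := heq ▸ d.adj
  exact hd' (w.mem_verts_toSubgraph.1 (w.toSubgraph.edge_vert hadj.symm))

theorem OneEnded.threeConnected (hone : OneEnded G) (htrans : ∀ u v : V, ∃ α : G ≃g G, α u = v)
    {w : G.Walk v v} (hw : w.IsCycle) : ThreeConnected G := by
  have := hone.infinite
  have hG := hone.preconnected htrans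
  refine ⟨Or.inr this, fun s hs hcard => ?_⟩
  have hinf {u : V} (hu : u ∈ sᶜ) : (componentIn G sᶜ u).Infinite := fun hfin => by
    have hX : hfin.toFinset.Nonempty := hfin.toFinset_nonempty.2 ⟨u, .refl hu⟩
    have hsub : (boundary G hfin.toFinset : Set V) ⊆ s := by
      simpa [boundary] using outerBoundary_componentIn_subset sᶜ u
    have h1 := degree_add_two_le_two_mul_card_boundary htrans hG hX v
    have h2 := three_le_degree_of_isCycle htrans hG hw v
    have h3 := Set.ncard_le_ncard hsub hs
    rw [Set.ncard_coe_finset] at h3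
    omega
  obtain ⟨u, hu⟩ := hs.exists_notMem
  exact connected_of_forall_reachableIn hu fun v hv => hone.reachableIn hs (hinf hu) (hinf hv)

end LocallyFinite

end OneEnded

section Flag

variable {V : Type*} {G : SimpleGraph V} {f : GFlag V}

-- Every vertex of a cycle has two neighbours on it, so an edge-preserving injection that fixes a
-- vertex and one of these neighbours fixes the other one too.
theorem apply_eq_self_of_mem_support_of_isCycle {v p q : V} {w : G.Walk v v} (hw : w.IsCycle)
    {σ : V → V} (hinj : σ.Injective) (hσ : ∀ x y, s(x, y) ∈ w.edges → s(σ x, σ y) ∈ w.edges)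
    (hpq : s(p, q) ∈ w.edges) (hp : σ p = p) (hq : σ q = q) {x : V} (hx : x ∈ w.support) :
    σ x = x := by
  simp only [← Walk.adj_toSubgraph_iff_mem_edges] at hσ hpq
  have step {x y z : V} (hxy : w.toSubgraph.Adj x y) (hxz : w.toSubgraph.Adj x z)
      (hσx : σ x = x) (hσy : σ y = y) : σ z = z := by
    obtain ⟨m, n, -, hmn⟩ := Set.ncard_eq_two.1 (hw.ncard_neighborSet_toSubgraph_eq_two
      (w.mem_verts_toSubgraph.1 hxy.fst_mem))
    have nbr {t : V} (ht : w.toSubgraph.Adj x t) : t = m ∨ t = n := by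
      simpa using hmn.subset ht
    have hxσz : w.toSubgraph.Adj x (σ z) := by simpa [hσx] using hσ x z hxz
    have := nbr hxy
    have := nbr hxz
    have := nbr hxσz
    grind [Function.Injective]
  set T := {x | σ x = x ∧ ∃ y, w.toSubgraph.Adj x y ∧ σ y = y}
  have hpT : p ∈ T := ⟨hp, q, hpq, hq⟩
  by_contra hxT
  obtain ⟨r⟩ := w.toSubgraph_connected.coe.preconnected ⟨p, hpq.fst_mem⟩
    ⟨x, w.mem_verts_toSubgraph.2 hx⟩
  obtain ⟨d, -, ⟨hd, y, hy, hσy⟩, hd'⟩ := r.exists_boundary_dart {x | x.1 ∈ T} hpT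
    fun h => hxT h.1
  have hadj : w.toSubgraph.Adj d.fst d.snd := d.adj
  exact hd' ⟨step hy hadj hd hσy, _, hadj.symm, hd⟩

theorem flagMap_trans (α β : G ≃g G) (f : GFlag V) :
    flagMap (α.trans β) f = flagMap β (flagMap α f) := by
  simp [flagMap, Set.image_image, Sym2.map_map]

theorem flagMap_symm_flagMap (α : G ≃g G) (f : GFlag V) :
    flagMap α.symm (flagMap α f) = f := by
  rw [← flagMap_trans]
  simp [flagMap]

theorem IsFlag.apply_eq_self [G.LocallyFinite] (emb : PlanarEmbedding G) (hG : ThreeConnected G)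
    (hf : IsFlag G f) {α : G ≃g G} (hα : flagMap α f = f) (x : V) : α x = x := by
  obtain ⟨u, e, F⟩ := f
  obtain ⟨hu, he, v, w, hw, rfl⟩ := hf
  simp only [flagMap, Prod.mk.injEq] at hα hu he
  obtain ⟨hαu, hαe, hαF⟩ := hα
  obtain ⟨q, rfl⟩ := Sym2.mem_iff_exists.1 hu
  rw [Sym2.map_mk, hαu, Sym2.congr_right] at hαe
  exact hw.apply_eq_self emb hG (fun _ => apply_eq_self_of_mem_support_of_isCycle hw.1 α.injective
    (fun a b hab => hαF.subset ⟨s(a, b), hab, rfl⟩) he hαu hαe) x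

theorem IsFlag.eq_of_flagMap_eq [G.LocallyFinite] (emb : PlanarEmbedding G)
    (hG : ThreeConnected G) (hf : IsFlag G f) {α β : G ≃g G} (h : flagMap α f = flagMap β f) :
    α = β := by
  ext x
  have hfix : flagMap (α.trans β.symm) f = f := by rw [flagMap_trans, h, flagMap_symm_flagMap]
  simpa [RelIso.symm_apply_eq] using hf.apply_eq_self emb hG hfix x

theorem unique_automorphism_of_same_colour_general [G.LocallyFinite]
    (hpl : Nonempty (PlanarEmbedding G)) (htrans : ∀ u v : V, ∃ α : G ≃g G, α u = v)
    (hone : OneEnded G) {φ : GFlag V → GFlag V}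
    (hφ : ∀ f : GFlag V, IsFlag G f → ∃ α : G ≃g G, flagMap α f = φ f)
    {f h : GFlag V} (hf : IsFlag G f) (hh : IsFlag G h) (heq : φ f = φ h) :
    ∃! α : G ≃g G, flagMap α f = h := by
  obtain ⟨emb⟩ := hpl
  obtain ⟨α, hα⟩ := hφ f hf
  obtain ⟨β, hβ⟩ := hφ h hh
  have ⟨_, _, _, w, hw, _⟩ := hf
  have hG := hone.threeConnected htrans hw.1
  have hexists : flagMap (α.trans β.symm) f = h := by
    rw [flagMap_trans, hα, heq, ← hβ, flagMap_symm_flagMap]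
  exact ⟨_, hexists, fun γ hγ => hf.eq_of_flagMap_eq emb hG (hγ.trans hexists.symm)⟩

end Flag

/-- Let `G` be planar, 1-ended, vertex-transitive and locally finite, `Δ` a fundamental
domain of flags at `o` (a connected sequence of flags at `o` containing exactly one flag
from each `Aut(G)`-orbit) and `φ` the map assigning to each flag the unique flag of `Δ` in
its orbit. If `φ f = φ h`, then there is exactly one automorphism `a` of `G` with
`a f = h`. -/
theorem unique_automorphism_of_same_colour
    {V : Type*} (G : SimpleGraph V) [G.LocallyFinite]
    (hpl : Nonempty (PlanarEmbedding G))
    (htrans : ∀ u v : V, ∃ α : G ≃g G, α u = v)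
    (hone : OneEnded G) (o : V)
    (Δ : List (GFlag V))
    (hΔflag : ∀ f ∈ Δ, IsFlag G f ∧ f.1 = o)
    (hΔchain : Δ.Chain' FlagIncident)
    (hΔorbit : ∀ f : GFlag V, IsFlag G f → ∃! g : GFlag V,
      g ∈ Δ ∧ ∃ α : G ≃g G, flagMap α f = g)
    (φ : GFlag V → GFlag V)
    (hφ : ∀ f : GFlag V, IsFlag G f → φ f ∈ Δ ∧ ∃ α : G ≃g G, flagMap α f = φ f)
    (f h : GFlag V) (hf : IsFlag G f) (hh : IsFlag G h) (heq : φ f = φ h) :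
    ∃! α : G ≃g G, flagMap α f = h :=
  unique_automorphism_of_same_colour_general hpl htrans hone (fun f hf => (hφ f hf).2) hf hh heq
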